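/- arXiv:1201.1358 — 11 statements merged into one kernel-verified Lean document; each statement's English description precedes it below -/
import Mathlib

section
/- Let A ≥ 0 and B, k ∈ ℝ, not all three of A, B, k equal to zero, and set D = 4A² − 4Bk − k². Consider the quadratic polynomial Q(z) = (−A + iB)z² − i(2B + k)z + (A + iB) (which equals (1−z)²·(A(1+z)/(1−z) + iB) − ikz). Then: (1) D < 0 if and only if k < 2(−B − √(A² + B²)) or k > 2(−B + √(A² + B²)); (2) if D < 0 then Q has a root in the open unit disk 𝔻 = {z : |z| < 1}; (3) if D ≥ 0 then every root of Q has modulus 1; (4) D = 0 if and only if k = 2(−B + √(A² + B²)) or k = 2(−B − √(A² + B²)), and in that case Q has a double root, lying on the unit circle. -/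
open Complex Real

/-- properties of the quadratic
`Q(z) = (-A + iB) z² - i(2B + k) z + (A + iB)` and its discriminant
`D = 4A² - 4Bk - k²`, describing ellipticity/hyperbolicity/parabolicity of the
semigroup of automorphisms generated by `(1-z)²(A(1+z)/(1-z) + iB) - ikz`. -/
theorem stmt_2 (A B k : ℝ) (hA : 0 ≤ A) (hnz : ¬(A = 0 ∧ B = 0 ∧ k = 0))
    (D : ℝ) (hD : D = 4 * A ^ 2 - 4 * B * k - k ^ 2)
    (Q : ℂ → ℂ)
    (hQ : ∀ z : ℂ, Q z = (-(A : ℂ) + Complex.I * B) * z ^ 2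
      - Complex.I * (2 * B + k) * z + ((A : ℂ) + Complex.I * B)) :
    -- (1) characterization of D < 0
    (D < 0 ↔ (k < 2 * (-B - Real.sqrt (A ^ 2 + B ^ 2)) ∨
              k > 2 * (-B + Real.sqrt (A ^ 2 + B ^ 2)))) ∧
    -- (2) if D < 0, then Q has a root in the open unit disk
    (D < 0 → ∃ z : ℂ, ‖z‖ < 1 ∧ Q z = 0) ∧
    -- (3) if D ≥ 0, every root of Q has modulus 1
    (0 ≤ D → ∀ z : ℂ, Q z = 0 → ‖z‖ = 1) ∧
    -- (4) characterization of D = 0, and a double root on the unit circle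
    ((D = 0 ↔ (k = 2 * (-B + Real.sqrt (A ^ 2 + B ^ 2)) ∨
               k = 2 * (-B - Real.sqrt (A ^ 2 + B ^ 2)))) ∧
     (D = 0 → ∃ z : ℂ, ‖z‖ = 1 ∧ Q z = 0 ∧
        2 * (-(A : ℂ) + Complex.I * B) * z - Complex.I * (2 * B + k) = 0)) := by
  set s := Real.sqrt (A ^ 2 + B ^ 2) with hs
  have hs0 : 0 ≤ s := Real.sqrt_nonneg _
  have hs2 : s ^ 2 = A ^ 2 + B ^ 2 := Real.sq_sqrt (by positivity)
  obtain ⟨m, hm⟩ : ∃ m : ℝ, m = 2 * B + k := ⟨_, rfl⟩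
  have hk : k = m - 2 * B := by linarith
  have hDm : D = 4 * s ^ 2 - m ^ 2 := by rw [hD, hs2, hk]; ring
  have hI : Complex.I ^ 2 = -1 := Complex.I_sq
  have hkC : (2 * (B : ℂ) + k) = (m : ℂ) := by rw [hm]; push_cast; ring
  rw [hkC]
  have hQ2 : ∀ z : ℂ, Q z = Complex.I * ((B + Complex.I * A) * z ^ 2 - m * z
      + (B - Complex.I * A)) := by
    intro z
    rw [hQ]
    linear_combination (A - A * z ^ 2) * hI - Complex.I * z * hkC
  have hab : ((B : ℂ) + Complex.I * A) * (B - Complex.I * A) = A ^ 2 + B ^ 2 := by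
    linear_combination (-A ^ 2 : ℂ) * hI
  have hs2C : (s : ℂ) ^ 2 = (A : ℂ) ^ 2 + (B : ℂ) ^ 2 := by exact_mod_cast hs2
  have hspos : 0 ≤ D → 0 < s := by
    intro h
    rcases hs0.lt_or_eq with h1 | h1
    · exact h1
    · exfalso
      rw [← h1] at hDm hs2
      have hm0 : m = 0 := by nlinarith
      have hA0 : A = 0 := by nlinarith
      have hB0 : B = 0 := by nlinarith
      exact hnz ⟨hA0, hB0, by rw [hk, hm0, hB0]; ring⟩
  refine ⟨?_, ?_, ?_, ?_, ?_⟩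
  · constructor
    · intro h
      by_contra! hc
      nlinarith [hc.1, hc.2]
    · rintro (h | h) <;> nlinarith
  · intro h
    have hw : ∃ w : ℝ, w ^ 2 - 2 * m * w + 4 * s ^ 2 = 0 ∧ 2 * s < |w| := by
      have hr2 : Real.sqrt (m ^ 2 - 4 * s ^ 2) ^ 2 = m ^ 2 - 4 * s ^ 2 :=
        Real.sq_sqrt (by linarith)
      have hr0 := Real.sqrt_nonneg (m ^ 2 - 4 * s ^ 2)
      set r := Real.sqrt (m ^ 2 - 4 * s ^ 2)
      have hms : 2 * s < |m| := by
        apply lt_of_pow_lt_pow_left₀ 2 (abs_nonneg m)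
        rw [sq_abs]; linarith
      rcases le_total 0 m with h0 | h0
      · refine ⟨m + r, by nlinarith, ?_⟩
        rw [abs_of_nonneg h0] at hms
        rw [abs_of_nonneg (by linarith)]; linarith
      · refine ⟨m - r, by nlinarith, ?_⟩
        rw [abs_of_nonpos h0] at hms
        rw [abs_of_nonpos (by linarith)]; linarith
    obtain ⟨w, hw, hws⟩ := hw
    have hwpos : 0 < |w| := by linarith
    have hw0 : (w : ℂ) ≠ 0 := by exact_mod_cast abs_pos.mp hwpos
    have hwC : (w : ℂ) ^ 2 - 2 * m * w + 4 * s ^ 2 = 0 := by exact_mod_cast hw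
    have hn : ‖(B : ℂ) - Complex.I * A‖ = s := by
      rw [hs, Complex.norm_def, Complex.normSq_apply]
      congr 1
      simp; ring
    refine ⟨2 * (B - Complex.I * A) / w, ?_, ?_⟩
    · rw [norm_div, norm_mul, hn, Complex.norm_real, Real.norm_eq_abs, div_lt_one hwpos]
      simpa using hws
    · rw [hQ2]
      have key : (B + Complex.I * A) * (2 * (B - Complex.I * A)) ^ 2
          - m * (2 * (B - Complex.I * A)) * w
          + (B - Complex.I * A) * w ^ 2 = 0 := by
        rw [hs2C] at hwC
        linear_combination (B - Complex.I * A) * hwC + 4 * (B - Complex.I * A) * hab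
      have key2 : (B + Complex.I * A) * (2 * (B - Complex.I * A) / w) ^ 2
          - m * (2 * (B - Complex.I * A) / w) + (B - Complex.I * A) = 0 := by
        have e : (B + Complex.I * A) * (2 * (B - Complex.I * A) / w) ^ 2
          - m * (2 * (B - Complex.I * A) / w) + (B - Complex.I * A) =
          ((B + Complex.I * A) * (2 * (B - Complex.I * A)) ^ 2
          - m * (2 * (B - Complex.I * A)) * w
          + (B - Complex.I * A) * w ^ 2) / w ^ 2 := by
          field_simp
        rw [e, key, zero_div]
      rw [key2, mul_zero]
  · intro h z hz
    have hsp := hspos h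
    rw [hQ2] at hz
    replace hz := (mul_eq_zero.mp hz).resolve_left Complex.I_ne_zero
    have hu : (2 * (B + Complex.I * A) * z - m) ^ 2 = ((-D : ℝ) : ℂ) := by
      rw [hDm]; push_cast; rw [hs2C]
      linear_combination 4 * (B + Complex.I * A) * hz - 4 * hab
    have hn : ‖(B : ℂ) + Complex.I * A‖ = s := by
      rw [hs, Complex.norm_def, Complex.normSq_apply]
      congr 1
      simp; ring
    obtain ⟨u, hudef⟩ : ∃ u : ℂ, u = 2 * (B + Complex.I * A) * z - m := ⟨_, rfl⟩
    rw [← hudef] at hu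
    have h1 := congrArg Complex.re hu
    have h2 := congrArg Complex.im hu
    simp only [pow_two, Complex.mul_re, Complex.mul_im, Complex.ofReal_re,
      Complex.ofReal_im] at h1 h2
    have hre : u.re = 0 := by
      by_contra hne
      have : u.im = 0 := by
        have : u.re * u.im = 0 := by linarith
        exact (mul_eq_zero.mp this).resolve_left hne
      rw [this] at h1
      have := mul_self_pos.mpr hne
      linarith
    have hum : 2 * (B + Complex.I * A) * z = u + m := by rw [hudef]; ring
    have h3 : ‖u + m‖ ^ 2 = (2 * s) ^ 2 := by
      rw [Complex.sq_norm, Complex.normSq_apply]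
      simp only [Complex.add_re, Complex.add_im, Complex.ofReal_re, Complex.ofReal_im]
      rw [hre] at h1 ⊢
      nlinarith
    have h4 : ‖u + m‖ = 2 * s :=
      (pow_left_inj₀ (norm_nonneg _) (by positivity) two_ne_zero).mp h3
    rw [← hum, norm_mul, norm_mul, hn] at h4
    simp only [Complex.norm_ofNat] at h4
    have h5 : (2 * s) * (‖z‖ - 1) = 0 := by linarith
    rcases mul_eq_zero.mp h5 with h6 | h6 <;> linarith
  · constructor
    · intro h
      have : (m - 2 * s) * (m + 2 * s) = 0 := by linarith
      rcases mul_eq_zero.mp this with h6 | h6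
      · left; linarith
      · right; linarith
    · rintro (h | h)
      · have : m = 2 * s := by linarith
        rw [hDm, this]; ring
      · have : m = -(2 * s) := by linarith
        rw [hDm, this]; ring
  · intro h
    have hsp := hspos h.ge
    have hn : ‖(B : ℂ) + Complex.I * A‖ = s := by
      rw [hs, Complex.norm_def, Complex.normSq_apply]
      congr 1
      simp; ring
    have ha : (B : ℂ) + Complex.I * A ≠ 0 := by
      rw [← norm_pos_iff, hn]; exact hsp
    have hmC : (m : ℂ) ^ 2 = 4 * (A ^ 2 + B ^ 2) := by
      have : m ^ 2 = 4 * (A ^ 2 + B ^ 2) := by rw [← hs2]; linarith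
      exact_mod_cast this
    have hmabs : |m| = 2 * s := by
      rw [← pow_left_inj₀ (abs_nonneg _) (by positivity) two_ne_zero, sq_abs]
      linarith
    obtain ⟨z, hz⟩ : ∃ z : ℂ, z = m / (2 * (B + Complex.I * A)) := ⟨_, rfl⟩
    have hz2 : 2 * (B + Complex.I * A) * z = m := by
      rw [hz]; field_simp
    refine ⟨z, ?_, ?_, ?_⟩
    · rw [hz, norm_div, norm_mul, hn, Complex.norm_real, Real.norm_eq_abs, hmabs]
      simp only [Complex.norm_ofNat]
      exact div_self (by positivity)
    · rw [hQ2]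
      apply mul_left_cancel₀ ha
      linear_combination (Complex.I / 4 * (2 * (B + Complex.I * A) * z - m)) * hz2 - Complex.I / 4 * hmC + Complex.I * hab
    · linear_combination Complex.I * hz2 - 2 * A * z * hI
end

section
/- Let p̃ : 𝔻 → ℂ be holomorphic with Re p̃(z) ≥ 0 for all z ∈ 𝔻, and let k₀ ∈ ℝ. Suppose that for every z ∈ 𝔻 there exists a differentiable function x : ℝ → 𝔻 with x(0) = z and x'(t) = (1 − x(t))² p̃(x(t)) − i k₀ x(t) for all t ∈ ℝ (i.e., the vector field is complete in 𝔻, so the generated semigroup consists of automorphisms of 𝔻). Then for every k ∈ ℝ the same holds: for every z ∈ 𝔻 there exists a differentiable x : ℝ → 𝔻 with x(0) = z and x'(t) = (1 − x(t))² p̃(x(t)) − i k x(t) for all t ∈ ℝ. -/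
open Complex Metric

lemma aux_lip (F : ℂ → ℂ) (hF : DifferentiableOn ℂ F (ball 0 1)) (R : ℝ) (hR : R < 1) :
    ∃ L : ℝ, 0 ≤ L ∧ (∀ a ∈ closedBall (0:ℂ) R, ‖deriv F a‖ ≤ L) ∧
      ∀ a ∈ closedBall (0:ℂ) R, ∀ b ∈ closedBall (0:ℂ) R, ‖F b - F a‖ ≤ L * ‖b - a‖ := by
  have hsub : closedBall (0:ℂ) R ⊆ ball 0 1 := closedBall_subset_ball hR
  have hd : DifferentiableOn ℂ (deriv F) (ball 0 1) := hF.deriv isOpen_ball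
  obtain ⟨L, hL⟩ := (isCompact_closedBall (0:ℂ) R).exists_bound_of_continuousOn
    (hd.continuousOn.mono hsub)
  have hL' : ∀ a ∈ closedBall (0:ℂ) R, ‖deriv F a‖ ≤ max L 0 :=
    fun a ha => (hL a ha).trans (le_max_left _ _)
  refine ⟨max L 0, le_max_right _ _, hL', fun a ha b hb => ?_⟩
  exact (convex_closedBall (0:ℂ) R).norm_image_sub_le_of_norm_deriv_le
    (fun x hx => hF.differentiableAt (isOpen_ball.mem_nhds (hsub hx))) hL' ha hb

lemma aux_taylor (F : ℂ → ℂ) (hF : DifferentiableOn ℂ F (ball 0 1)) (R : ℝ) (hR : R < 1) :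
    ∃ C : ℝ, 0 ≤ C ∧ 
      ∀ a ∈ closedBall (0:ℂ) R, ∀ b ∈ closedBall (0:ℂ) R,
        ‖F b - F a - deriv F a * (b - a)‖ ≤ C * ‖b - a‖ ^ 2 := by
  have hsub : closedBall (0:ℂ) R ⊆ ball 0 1 := closedBall_subset_ball hR
  have hd : DifferentiableOn ℂ (deriv F) (ball 0 1) := hF.deriv isOpen_ball
  obtain ⟨C, hC0, -, hC⟩ := aux_lip _ hd R hR
  refine ⟨C, hC0, fun a ha b hb => ?_⟩
  have := ((convex_closedBall (0:ℂ) R).inter (convex_closedBall a ‖b - a‖)).norm_image_sub_le_of_norm_hasDerivWithin_le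
    (f := fun u => F u - deriv F a * u) (f' := fun u => deriv F u - deriv F a * 1)
    (C := C * ‖b - a‖) (x := a) (y := b)
    (fun x hx => ((hF.differentiableAt (isOpen_ball.mem_nhds (hsub hx.1))).hasDerivAt.sub
      ((hasDerivAt_id x).const_mul _)).hasDerivWithinAt)
    (fun x hx => by
      have h1 := hC a ha x hx.1
      have h2 := hx.2
      rw [mem_closedBall, dist_eq_norm] at h2
      rw [mul_one]
      exact h1.trans (by gcongr)) ⟨ha, by simp⟩ ⟨hb, by simp [dist_eq_norm]⟩
  calc _ = ‖F b - deriv F a * b - (F a - deriv F a * a)‖ := by congr 1; ring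
    _ ≤ _ := this
    _ = _ := by ring

lemma flow_diff (F : ℂ → ℂ) (hF : DifferentiableOn ℂ F (ball 0 1)) (φ : ℂ → ℝ → ℂ)
    (hm : ∀ z ∈ ball (0:ℂ) 1, ∀ t, φ z t ∈ ball (0:ℂ) 1)
    (h0 : ∀ z ∈ ball (0:ℂ) 1, φ z 0 = z)
    (hφ : ∀ z ∈ ball (0:ℂ) 1, ∀ t, HasDerivAt (φ z) (F (φ z t)) t) (T : ℝ) (hT : 0 ≤ T)
    (z : ℂ) (hz : z ∈ ball (0:ℂ) 1) : DifferentiableAt ℂ (fun w => φ w T) z := by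
  have hxc : Continuous (φ z) := continuous_iff_continuousAt.2 fun t => (hφ z hz t).continuousAt
  obtain ⟨t0, ht0, hmax⟩ := (isCompact_Icc (a := (0:ℝ)) (b := T)).exists_isMaxOn
    ⟨0, by simp [hT]⟩ (hxc.norm.continuousOn)
  have hR1 : ‖φ z t0‖ < 1 := by simpa using hm z hz t0
  set R' := ‖φ z t0‖ with hR'
  obtain ⟨R, hRR, hR⟩ := exists_between hR1
  have hxR : ∀ t ∈ Set.Icc 0 T, ‖φ z t‖ ≤ R' := fun t ht => hmax ht
  obtain ⟨L, hL0, -, hL⟩ := aux_lip F hF R hR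
  obtain ⟨C, hC0, hC⟩ := aux_taylor F hF R hR
  have hd : DifferentiableOn ℂ (deriv F) (ball 0 1) := hF.deriv isOpen_ball
  have hgc : Continuous (fun t => deriv F (φ z t)) :=
    hd.continuousOn.comp_continuous hxc (hm z hz)
  set m : ℝ → ℂ := fun t => ∫ s in (0:ℝ)..t, deriv F (φ z s) with hmdef
  have hmd : ∀ t, HasDerivAt m (deriv F (φ z t)) t := fun t =>
    (hgc.integral_hasStrictDerivAt 0 t).hasDerivAt
  have hmc : Continuous m := continuous_iff_continuousAt.2 fun t => (hmd t).continuousAt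
  have hm0 : m 0 = 0 := by simp [hmdef]
  obtain ⟨E, hE⟩ := (isCompact_Icc (a := (0:ℝ)) (b := T)).exists_bound_of_continuousOn
    (f := fun t => cexp (-(m t))) (by fun_prop)
  have hE0 : 0 ≤ E := (norm_nonneg _).trans (hE 0 (by simp [hT]))
  set A := Real.exp ((L+1)*T) with hA
  have hA0 : 0 < A := Real.exp_pos _
  have key : ∀ w ∈ ball (0:ℂ) 1, ‖w - z‖ * A < R - R' → 
      ∀ t ∈ Set.Icc 0 T, ‖φ w t - φ z t‖ ≤ ‖w - z‖ * A ∧ ‖φ w t‖ ≤ R := by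
    intro w hw hs t ht
    have hR2 : ∀ t ∈ Set.Icc 0 T, ‖φ w t - φ z t‖ ≤ ‖w - z‖ * A → ‖φ w t‖ ≤ R := by
      intro t ht h
      have := norm_add_le (φ w t - φ z t) (φ z t)
      rw [sub_add_cancel] at this
      linarith [hxR t ht]
    suffices h : ‖φ w t - φ z t‖ ≤ ‖w - z‖ * A from ⟨h, hR2 t ht h⟩
    -- perturbed barrier
    have hexp : ∀ t ∈ Set.Icc 0 T, Real.exp ((L+1)*t) ≤ A := fun t ht =>
      Real.exp_le_exp.2 (by nlinarith [ht.2])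
    have hbar : ∀ η, 0 < η → η * A < R - R' → ‖w - z‖ ≤ η → ‖φ w t - φ z t‖ ≤ η * A := by
      intro η hη hη2 hle
      have := image_norm_le_of_norm_deriv_right_lt_deriv_boundary' (a := 0) (b := T)
        (f := fun t => φ w t - φ z t) (f' := fun t => F (φ w t) - F (φ z t))
        (B := fun t => η * Real.exp ((L+1)*t)) (B' := fun t => η * (Real.exp ((L+1)*t) * ((L+1)*1)))
        (fun t _ => ((hφ w hw t).sub (hφ z hz t)).continuousAt.continuousWithinAt)
        (fun t _ => ((hφ w hw t).sub (hφ z hz t)).hasDerivWithinAt)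
        (by simpa [h0 w hw, h0 z hz] using hle)
        (by fun_prop)
        (fun t _ => (((hasDerivAt_id t).const_mul (L+1)).exp.const_mul η).hasDerivWithinAt)
        (by
          intro s hs hn
          have hs' : s ∈ Set.Icc 0 T := ⟨hs.1, hs.2.le⟩
          have h1 : ‖φ w s - φ z s‖ ≤ η * A := by
            rw [hn]; exact mul_le_mul_of_nonneg_left (hexp s hs') hη.le
          have h2 : ‖φ w s‖ ≤ R := by
            have := norm_add_le (φ w s - φ z s) (φ z s)
            rw [sub_add_cancel] at this
            linarith [hxR s hs']
          have h3 := hL (φ z s) (by simpa using (hxR s hs').trans hRR.le) (φ w s) (by simpa using h2)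
          have : 0 < η * Real.exp ((L+1)*s) := by positivity
          rw [hn] at h3
          nlinarith) ht
      refine this.trans (mul_le_mul_of_nonneg_left (hexp t ht) hη.le)
    refine le_of_forall_pos_lt_add fun ε hε => ?_
    have hgap : 0 < min (R - R' - ‖w - z‖ * A) ε / (2*A) := by
      apply div_pos (lt_min (by linarith) hε) (by positivity)
    have hprod : (min (R - R' - ‖w - z‖ * A) ε / (2*A)) * A = min (R - R' - ‖w - z‖ * A) ε / 2 := by
      field_simp
    have hp : 0 < min (R - R' - ‖w - z‖ * A) ε := lt_min (by linarith) hε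
    have m1 := min_le_left (R - R' - ‖w - z‖ * A) ε
    have m2 := min_le_right (R - R' - ‖w - z‖ * A) ε
    have := hbar (‖w - z‖ + min (R - R' - ‖w - z‖ * A) ε / (2*A)) 
      (by positivity) (by rw [add_mul, hprod]; linarith) (by linarith)
    rw [add_mul, hprod] at this
    linarith
  have key2 : ∀ w ∈ ball (0:ℂ) 1, ‖w - z‖ * A < R - R' → 
      ‖φ w T - φ z T - (w - z) * cexp (m T)‖ ≤ (‖cexp (m T)‖ * (E * (C * A^2)) * T) * ‖w - z‖ ^ 2 := by
    intro w hw hs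
    have hk := key w hw hs
    have hq : ∀ t, HasDerivAt (fun t => (φ w t - φ z t) * cexp (-(m t)))
        ((F (φ w t) - F (φ z t)) * cexp (-(m t)) + (φ w t - φ z t) * (cexp (-(m t)) * (-(deriv F (φ z t))))) t :=
      fun t => ((hφ w hw t).sub (hφ z hz t)).mul ((hmd t).neg.cexp)
    have := norm_image_sub_le_of_norm_deriv_le_segment' (a := 0) (b := T)
      (C := E * (C * (‖w - z‖ * A)^2))
      (fun t _ => (hq t).hasDerivWithinAt) (by
        intro t ht
        have ht' : t ∈ Set.Icc 0 T := ⟨ht.1, ht.2.le⟩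
        have e : (F (φ w t) - F (φ z t)) * cexp (-(m t)) + (φ w t - φ z t) * (cexp (-(m t)) * (-(deriv F (φ z t))))
          = cexp (-(m t)) * (F (φ w t) - F (φ z t) - deriv F (φ z t) * (φ w t - φ z t)) := by ring
        rw [e, norm_mul]
        refine mul_le_mul (hE t ht') ?_ (norm_nonneg _) hE0
        refine (hC (φ z t) (by simpa using (hxR t ht').trans hRR.le) (φ w t) (by simpa using (hk t ht').2)).trans ?_
        gcongr
        exact (hk t ht').1) T ⟨hT, le_rfl⟩
    simp only [h0 w hw, h0 z hz, hm0, neg_zero, Complex.exp_zero, mul_one, sub_zero] at this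
    have e : φ w T - φ z T - (w - z) * cexp (m T) = cexp (m T) * ((φ w T - φ z T) * cexp (-(m T)) - (w - z)) := by
      have : cexp (m T) * cexp (-(m T)) = 1 := by rw [← Complex.exp_add]; simp
      linear_combination (-(φ w T - φ z T)) * this
    rw [e, norm_mul]
    refine (mul_le_mul_of_nonneg_left this (norm_nonneg _)).trans (le_of_eq (by ring))
  have : HasDerivAt (fun w => φ w T) (cexp (m T)) z := by
    rw [hasDerivAt_iff_isLittleO]
    have hb : (fun w => φ w T - φ z T - (w - z) • cexp (m T)) =O[nhds z] fun w => ‖w - z‖ ^ 2 := by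
      apply Asymptotics.IsBigO.of_bound (‖cexp (m T)‖ * (E * (C * A^2)) * T)
      have hc : Filter.Tendsto (fun w => ‖w - z‖ * A) (nhds z) (nhds 0) := by
        have : Continuous (fun w => ‖w - z‖ * A) := by fun_prop
        simpa using this.tendsto z
      filter_upwards [isOpen_ball.mem_nhds hz, hc.eventually (gt_mem_nhds (sub_pos.2 hRR))] with w hw hs
      simpa using key2 w hw hs
    refine hb.trans_isLittleO ?_
    have := (Asymptotics.isLittleO_pow_sub_sub z (m := 2) (by norm_num)).norm_left
    simpa using this
  exact this.differentiableAt

lemma flow_diff' (F : ℂ → ℂ) (hF : DifferentiableOn ℂ F (ball 0 1)) (φ : ℂ → ℝ → ℂ)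
    (hm : ∀ z ∈ ball (0:ℂ) 1, ∀ t, φ z t ∈ ball (0:ℂ) 1)
    (h0 : ∀ z ∈ ball (0:ℂ) 1, φ z 0 = z)
    (hφ : ∀ z ∈ ball (0:ℂ) 1, ∀ t, HasDerivAt (φ z) (F (φ z t)) t) (T : ℝ) :
    DifferentiableOn ℂ (fun w => φ w T) (ball 0 1) := by
  intro z hz
  apply DifferentiableAt.differentiableWithinAt
  rcases le_total 0 T with hT | hT
  · exact flow_diff F hF φ hm h0 hφ T hT z hz
  · have := flow_diff (fun z => - F z) hF.neg (fun z t => φ z (-t)) (fun z hz t => hm z hz _)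
      (fun z hz => by simpa using h0 z hz)
      (fun z hz t => by
        have h1 := HasDerivAt.scomp t (hφ z hz (-t)) (hasDerivAt_neg t)
        rw [neg_one_smul] at h1
        exact h1) (-T) (by linarith) z hz
    simpa using this

lemma normsq_id (a b : ℂ) : ‖1 - (starRingEnd ℂ) a * b‖^2 - ‖b - a‖^2 = (1 - ‖a‖^2) * (1 - ‖b‖^2) := by
  simp only [Complex.sq_norm, Complex.normSq_apply]
  simp
  ring

lemma pick (f : ℂ → ℂ) (hf : DifferentiableOn ℂ f (ball 0 1)) (hm : ∀ z ∈ ball (0:ℂ) 1, f z ∈ ball (0:ℂ) 1)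
    (z : ℂ) (hz : z ∈ ball (0:ℂ) 1) :
    ‖f z - f 0‖^2 ≤ ‖z‖^2 * ‖1 - (starRingEnd ℂ) (f 0) * f z‖^2 := by
  have h00 : (0:ℂ) ∈ ball (0:ℂ) 1 := by simp
  have hpos : ∀ w ∈ ball (0:ℂ) 1, ‖f w - f 0‖ < ‖1 - (starRingEnd ℂ) (f 0) * f w‖ := by
    intro w hw
    have h1 : ‖f 0‖ < 1 := by simpa using hm 0 h00
    have h2 : ‖f w‖ < 1 := by simpa using hm w hw
    have := normsq_id (f 0) (f w)
    have h3 : 0 < (1 - ‖f 0‖^2) * (1 - ‖f w‖^2) := by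
      apply mul_pos <;> nlinarith [norm_nonneg (f 0), norm_nonneg (f w)]
    exact lt_of_pow_lt_pow_left₀ 2 (norm_nonneg _) (by linarith)
  have hne : ∀ w ∈ ball (0:ℂ) 1, 1 - (starRingEnd ℂ) (f 0) * f w ≠ 0 := fun w hw =>
    norm_pos_iff.1 ((norm_nonneg _).trans_lt (hpos w hw))
  have := Complex.norm_le_norm_of_mapsTo_ball (R := 1)
    (f := fun w => (f w - f 0) / (1 - (starRingEnd ℂ) (f 0) * f w)) (z := z)
    ((hf.sub_const _).div ((hf.const_mul _).const_sub _) hne)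
    (fun w hw => by
      have := hpos w hw
      have h' := norm_pos_iff.2 (hne w hw)
      simp only [mem_closedBall, mem_ball, dist_zero_right, norm_div]
      exact ((div_lt_one h').2 this).le) (by simp) (by simpa using hz)
  simp only [norm_div] at this
  rw [div_le_iff₀ (norm_pos_iff.2 (hne z hz))] at this
  rw [← mul_pow]
  gcongr

lemma re_id (F : ℂ → ℂ) (hF : DifferentiableOn ℂ F (ball 0 1)) (φ : ℂ → ℝ → ℂ)
    (hm : ∀ z ∈ ball (0:ℂ) 1, ∀ t, φ z t ∈ ball (0:ℂ) 1)
    (h0 : ∀ z ∈ ball (0:ℂ) 1, φ z 0 = z)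
    (hφ : ∀ z ∈ ball (0:ℂ) 1, ∀ t, HasDerivAt (φ z) (F (φ z t)) t) (z : ℂ) (hz : z ∈ ball (0:ℂ) 1) :
    ((starRingEnd ℂ) z * (F z - F 0 + (starRingEnd ℂ) (F 0) * z^2)).re = 0 := by
  have h00 : (0:ℂ) ∈ ball (0:ℂ) 1 := by simp
  have hp : ∀ t, ‖φ z t - φ 0 t‖^2 - ‖z‖^2 * ‖1 - (starRingEnd ℂ) (φ 0 t) * φ z t‖^2 ≤ 0 := fun t =>
    sub_nonpos.2 (pick (fun w => φ w t) (flow_diff' F hF φ hm h0 hφ t) (fun z hz => hm z hz t) z hz)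
  have hx := hφ z hz 0
  have hy := hφ 0 h00 0
  have hys : HasDerivAt (fun t => (starRingEnd ℂ) (φ 0 t)) ((starRingEnd ℂ) (F (φ 0 0))) 0 := by
    simpa using hy.star
  have hd := (hx.sub hy).norm_sq.sub (((hys.mul hx).const_sub 1).norm_sq.const_mul (‖z‖^2))
  have hmax : IsLocalMax (fun t => ‖φ z t - φ 0 t‖^2 - ‖z‖^2 * ‖1 - (starRingEnd ℂ) (φ 0 t) * φ z t‖^2) 0 := by
    refine Filter.Eventually.of_forall fun t => ?_
    refine (hp t).trans (le_of_eq ?_)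
    simp [h0 z hz, h0 0 h00]
  have := hmax.hasDerivAt_eq_zero hd
  simp [h0 z hz, h0 0 h00, Complex.inner, Complex.sq_norm, Complex.normSq_apply] at this
  simp [pow_two]
  linear_combination (1/2) * this

lemma form (F : ℂ → ℂ) (hF : DifferentiableOn ℂ F (ball 0 1))
    (h : ∀ z ∈ ball (0:ℂ) 1, ((starRingEnd ℂ) z * (F z - F 0 + (starRingEnd ℂ) (F 0) * z^2)).re = 0) :
    ∃ b : ℝ, ∀ z ∈ ball (0:ℂ) 1, F z = F 0 + I * b * z - (starRingEnd ℂ) (F 0) * z^2 := by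
  have hn : ball (0:ℂ) 1 ∈ nhds (0:ℂ) := isOpen_ball.mem_nhds (by simp)
  set H : ℂ → ℂ := fun z => F z - F 0 + (starRingEnd ℂ) (F 0) * z^2 with hH
  have hHd : DifferentiableOn ℂ H (ball 0 1) := (hF.sub_const _).add (by fun_prop)
  have hH0 : H 0 = 0 := by simp [hH]
  have hs := (Complex.differentiableOn_dslope hn).2 hHd
  have hre : ∀ z ∈ ball (0:ℂ) 1, z ≠ 0 → (dslope H 0 z).re = 0 := by
    intro z hz hz0
    rw [dslope_of_ne _ hz0, slope_def_field, hH0, sub_zero, sub_zero]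
    have e : H z / z = ((1 / normSq z : ℝ) : ℂ) * ((starRingEnd ℂ) z * H z) := by
      have : (normSq z : ℂ) ≠ 0 := by simpa using hz0
      push_cast
      field_simp
      rw [Complex.normSq_eq_conj_mul_self]
      ring
    rw [e, Complex.re_ofReal_mul, h z hz, mul_zero]
  have hre0 : (dslope H 0 0).re = 0 := by
    have hc : ContinuousAt (fun z => (dslope H 0 z).re) 0 :=
      Complex.continuous_re.continuousAt.comp (hs.differentiableAt hn).continuousAt
    have h1 : Filter.Tendsto (fun z => (dslope H 0 z).re) (nhdsWithin 0 {0}ᶜ) (nhds 0) := by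
      refine tendsto_const_nhds.congr' ?_
      filter_upwards [self_mem_nhdsWithin, nhdsWithin_le_nhds hn] with z hz hz'
      exact (hre z hz' hz).symm
    exact tendsto_nhds_unique (hc.tendsto.mono_left nhdsWithin_le_nhds) h1
  have hre' : ∀ z ∈ ball (0:ℂ) 1, (dslope H 0 z).re = 0 := by
    intro z hz
    by_cases h0 : z = 0
    · rw [h0, hre0]
    · exact hre z hz h0
  obtain ⟨c, hc⟩ := AnalyticOnNhd.eq_const_of_re_eq_const (c₀ := 0) (hs.analyticOnNhd isOpen_ball) hre' isOpen_ball
    ((convex_ball (0:ℂ) 1).isConnected ⟨0, by simp⟩)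
  have hcre : c.re = 0 := by
    rw [← hc 0 (by simp)]; exact hre0
  refine ⟨c.im, fun z hz => ?_⟩
  have h1 : H z = z * c := by
    have := sub_smul_dslope H 0 z
    rw [hc z hz, hH0] at this
    simpa using this.symm
  have h2 : c = I * c.im := by
    apply Complex.ext <;> simp [hcre]
  rw [← h2]
  simp only [hH] at h1
  linear_combination h1

lemma solve (a : ℂ) (b : ℝ) (z : ℂ) (hz : z ∈ ball (0:ℂ) 1) : ∃ x : ℝ → ℂ,
      (∀ t : ℝ, x t ∈ ball (0 : ℂ) 1) ∧ x 0 = z ∧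
      (∀ t : ℝ, HasDerivAt x (a + I * b * x t - (starRingEnd ℂ) a * (x t)^2) t) := by
  let A : (ℂ × ℂ) →L[ℝ] (ℂ × ℂ) :=
    LinearMap.toContinuousLinearMap
    { toFun := fun v => (I * (b/2) * v.1 + a * v.2, (starRingEnd ℂ) a * v.1 - I * (b/2) * v.2)
      map_add' := fun u v => by ext <;> simp <;> ring
      map_smul' := fun r v => by ext <;> simp <;> ring }
  have hA : ∀ v, A v = (I * (b/2) * v.1 + a * v.2, (starRingEnd ℂ) a * v.1 - I * (b/2) * v.2) := fun v => rfl
  let S : ℝ → ℂ × ℂ := fun t => (NormedSpace.exp (t • A)) (z, 1)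
  have hS : ∀ t, HasDerivAt S (A (S t)) t := fun t => by
    have := (hasDerivAt_exp_smul_const' (𝕂 := ℝ) A t)
    exact this.clm_apply (hasDerivAt_const t (z, (1:ℂ))) |>.congr_deriv (by simp [S])
  have hS0 : S 0 = (z, 1) := by
    have h1 : (0:ℝ) • A = 0 := zero_smul ℝ A
    change (NormedSpace.exp ((0:ℝ) • A)) (z, 1) = (z, 1)
    rw [h1, NormedSpace.exp_zero]
    rfl
  have hu : ∀ t, HasDerivAt (fun t => (S t).1) (I * (b/2) * (S t).1 + a * (S t).2) t := fun t =>
    (hS t).fst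
  have hv : ∀ t, HasDerivAt (fun t => (S t).2) ((starRingEnd ℂ) a * (S t).1 - I * (b/2) * (S t).2) t := fun t =>
    (hS t).snd
  have hcons : ∀ t, ‖(S t).2‖^2 - ‖(S t).1‖^2 = 1 - ‖z‖^2 := by
    have hd : ∀ t, HasDerivAt (fun t => ‖(S t).2‖^2 - ‖(S t).1‖^2) 0 t := fun t => by
      refine ((hv t).norm_sq.sub (hu t).norm_sq).congr_deriv ?_
      simp [Complex.inner]
      ring
    intro t
    have := is_const_of_deriv_eq_zero (fun t => (hd t).differentiableAt) (fun t => (hd t).deriv) t 0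
    simpa [hS0] using this
  have hz1 : ‖z‖ < 1 := by simpa using hz
  have hlt : ∀ t, ‖(S t).1‖ < ‖(S t).2‖ := fun t => by
    have := hcons t
    exact lt_of_pow_lt_pow_left₀ 2 (norm_nonneg _) (by nlinarith [norm_nonneg z])
  have hne : ∀ t, (S t).2 ≠ 0 := fun t => norm_pos_iff.1 ((norm_nonneg _).trans_lt (hlt t))
  refine ⟨fun t => (S t).1 / (S t).2, fun t => ?_, by simp [hS0], fun t => ?_⟩
  · simp only [mem_ball, dist_zero_right, norm_div]
    exact (div_lt_one (norm_pos_iff.2 (hne t))).2 (hlt t)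
  · refine ((hu t).div (hv t) (hne t)).congr_deriv ?_
    have := hne t
    field_simp
    ring

theorem stmt_3 (p : ℂ → ℂ)
    (hol : DifferentiableOn ℂ p (ball (0 : ℂ) 1))
    (hre : ∀ z ∈ ball (0 : ℂ) 1, 0 ≤ (p z).re)
    (k₀ : ℝ)
    (hcomplete : ∀ z ∈ ball (0 : ℂ) 1, ∃ x : ℝ → ℂ,
      (∀ t : ℝ, x t ∈ ball (0 : ℂ) 1) ∧ x 0 = z ∧
      (∀ t : ℝ, HasDerivAt x ((1 - x t) ^ 2 * p (x t) - Complex.I * k₀ * x t) t)) :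
    ∀ k : ℝ, ∀ z ∈ ball (0 : ℂ) 1, ∃ x : ℝ → ℂ,
      (∀ t : ℝ, x t ∈ ball (0 : ℂ) 1) ∧ x 0 = z ∧
      (∀ t : ℝ, HasDerivAt x ((1 - x t) ^ 2 * p (x t) - Complex.I * k * x t) t) := by
  choose! φ hm h0 hφ using hcomplete
  set F : ℂ → ℂ := fun z => (1 - z)^2 * p z - I * k₀ * z with hFdef
  have hF : DifferentiableOn ℂ F (ball 0 1) := by
    apply DifferentiableOn.sub
    · exact DifferentiableOn.mul (by fun_prop) hol
    · fun_prop
  obtain ⟨b, hb⟩ := form F hF (re_id F hF φ hm h0 hφ)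
  intro k z hz
  obtain ⟨x, hx1, hx2, hx3⟩ := solve (F 0) (b + k₀ - k) z hz
  refine ⟨x, hx1, hx2, fun t => (hx3 t).congr_deriv ?_⟩
  have := hb (x t) (hx1 t)
  have e : F (x t) = (1 - x t)^2 * p (x t) - I * k₀ * x t := rfl
  rw [e] at this
  push_cast
  linear_combination -this
end

section
/- Let p̃ : 𝔻 → ℂ be holomorphic with Re p̃(z) ≥ 0 for all z ∈ 𝔻. The following are equivalent: (i) for every z ∈ 𝔻 there exists a differentiable function x : ℝ → 𝔻 with x(0) = z and x'(t) = (1 − x(t))² p̃(x(t)) for all t ∈ ℝ (completeness of the vector field (1−z)² p̃(z) in 𝔻); (ii) there exist A ≥ 0 and B ∈ ℝ such that p̃(z) = A(1+z)/(1−z) + iB for all z ∈ 𝔻. -/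
open Complex Metric

lemma aux_mem_ball (a : ℂ) (ha : 0 < a.re) (w : ℂ) (hw : 0 < w.re) :
    ‖(w - a) / (w + (starRingEnd ℂ) a)‖ < 1 := by
  have hne : w + (starRingEnd ℂ) a ≠ 0 := by
    intro h
    have := congrArg Complex.re h
    simp at this; linarith
  rw [norm_div, div_lt_one (norm_pos_iff.2 hne)]
  rw [← sq_lt_sq₀ (norm_nonneg _) (norm_nonneg _), ← Complex.normSq_eq_norm_sq,
    ← Complex.normSq_eq_norm_sq, Complex.normSq_apply, Complex.normSq_apply]
  simp
  nlinarith [mul_pos ha hw]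

lemma aux_one_sub_ne (z : ℂ) (hz : ‖z‖ < 1) : 1 - z ≠ 0 := by
  intro h
  have : z = 1 := by linear_combination -h
  rw [this] at hz; simp at hz

lemma aux_re_pos (a z : ℂ) (ha : 0 < a.re) (hz : ‖z‖ < 1) :
    0 < ((a + (starRingEnd ℂ) a * z) / (1 - z)).re := by
  have hne := aux_one_sub_ne z hz
  have h1 : (a + (starRingEnd ℂ) a * z) / (1 - z)
      = ((a + (starRingEnd ℂ) a * z) * (starRingEnd ℂ) (1 - z)) / (Complex.normSq (1 - z) : ℂ) := by
    rw [Complex.normSq_eq_conj_mul_self]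
    have : (starRingEnd ℂ) (1 - z) ≠ 0 := (map_ne_zero (starRingEnd ℂ)).2 hne
    field_simp
  rw [h1, Complex.div_ofReal_re]
  apply div_pos _ (Complex.normSq_pos.2 hne)
  have h2 : z.re * z.re + z.im * z.im < 1 := by
    rw [← Complex.normSq_apply, Complex.normSq_eq_norm_sq]
    nlinarith [norm_nonneg z]
  simp
  nlinarith [mul_pos ha (sub_pos.2 h2)]

lemma aux_schwarz_pick (φ : ℂ → ℂ) (a c : ℂ) (ha : 0 < a.re)
    (hmap : ∀ w : ℂ, 0 < w.re → 0 < (φ w).re)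
    (hd : ∀ w : ℂ, 0 < w.re → DifferentiableAt ℂ φ w)
    (hc : HasDerivAt φ c a) :
    ‖c‖ * a.re ≤ (φ a).re := by
  set b := φ a with hb
  have hbpos : 0 < b.re := hmap a ha
  let C : ℂ → ℂ := fun z => (a + (starRingEnd ℂ) a * z) / (1 - z)
  let g : ℂ → ℂ := fun z => (φ (C z) - b) / (φ (C z) + (starRingEnd ℂ) b)
  have hne : ∀ w : ℂ, 0 < w.re → w + (starRingEnd ℂ) b ≠ 0 := by
    intro w hw h
    have := congrArg Complex.re h
    simp at this; linarith
  have hC0 : C 0 = a := by simp [C]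
  have hg0 : g 0 = 0 := by simp [g, hC0, hb]
  have hCd : ∀ z : ℂ, ‖z‖ < 1 → DifferentiableAt ℂ C z := by
    intro z hz
    have := aux_one_sub_ne z hz
    simp only [C]
    fun_prop (disch := assumption)
  have hgd : DifferentiableOn ℂ g (ball 0 1) := by
    intro z hz
    rw [mem_ball_zero_iff] at hz
    have hp := aux_re_pos a z ha hz
    have h1 : DifferentiableAt ℂ (fun z => φ (C z)) z :=
      DifferentiableAt.comp z (hd _ hp) (hCd z hz)
    exact ((h1.sub_const b).div (h1.add_const _) (hne _ (hmap _ hp))).differentiableWithinAt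
  have hgm : Set.MapsTo g (ball 0 1) (closedBall (g 0) 1) := by
    intro z hz
    rw [mem_ball_zero_iff] at hz
    rw [hg0, mem_closedBall_zero_iff]
    exact (aux_mem_ball b hbpos _ (hmap _ (aux_re_pos a z ha hz))).le
  have hs := Complex.norm_deriv_le_one_of_mapsTo_ball hgd hgm one_pos
  have hCder : HasDerivAt C (a + (starRingEnd ℂ) a) 0 := by
    have h1 : HasDerivAt (fun z : ℂ => a + (starRingEnd ℂ) a * z) ((starRingEnd ℂ) a) 0 := by
      simpa using ((hasDerivAt_id (0:ℂ)).const_mul ((starRingEnd ℂ) a)).const_add a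
    have h2 : HasDerivAt (fun z : ℂ => 1 - z) (-1) 0 := by
      simpa using (hasDerivAt_id (0:ℂ)).const_sub 1
    have := h1.div h2 (by simp)
    refine this.congr_deriv ?_
    simp [add_comm]
  have hφC : HasDerivAt (fun z => φ (C z)) (c * (a + (starRingEnd ℂ) a)) 0 := by
    refine HasDerivAt.comp (0:ℂ) (h₂ := φ) ?_ hCder
    rw [hC0]; exact hc
  have hbb : b + (starRingEnd ℂ) b ≠ 0 := hne b hbpos
  have hgder : HasDerivAt g (c * (a + (starRingEnd ℂ) a) / (b + (starRingEnd ℂ) b)) 0 := by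
    have := (hφC.sub_const b).div (hφC.add_const ((starRingEnd ℂ) b)) (by rw [hC0]; exact hbb)
    refine this.congr_deriv ?_
    rw [hC0, ← hb]
    field_simp
    ring
  rw [hgder.deriv, Complex.add_conj, Complex.add_conj, norm_div, norm_mul, Complex.norm_real,
    Complex.norm_real, Real.norm_of_nonneg (by positivity), Real.norm_of_nonneg (by positivity),
    div_le_one (by positivity)] at hs
  linarith

/-- Noshiro–Warschawski -/
lemma aux_inj (h h' : ℂ → ℂ) (hd : ∀ w : ℂ, 0 < w.re → HasDerivAt h (h' w) w)
    (hpos : ∀ w : ℂ, 0 < w.re → 0 < (h' w).re) (a b : ℂ) (ha : 0 < a.re) (hb : 0 < b.re)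
    (hab : h a = h b) : a = b := by
  by_contra hne
  have hsub : b - a ≠ 0 := sub_ne_zero.2 (Ne.symm hne)
  let γ : ℝ → ℂ := fun t => a + t * (b - a)
  have hγ : ∀ t : ℝ, HasDerivAt γ (b - a) t := by
    intro t
    have := ((Complex.ofRealCLM.hasDerivAt (x := t)).mul_const (b - a)).const_add a
    exact this.congr_deriv (by simp)
  have hγpos : ∀ t ∈ Set.Icc (0:ℝ) 1, 0 < (γ t).re := by
    rintro t ⟨h0, h1⟩
    simp [γ]
    rcases lt_or_ge t 1 with h | h
    · nlinarith [mul_pos (sub_pos.2 h) ha, mul_nonneg h0 hb.le]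
    · have : t = 1 := le_antisymm h1 h
      subst this; linarith
  let F : ℝ → ℝ := fun t => ((h (γ t)) / (b - a)).re
  have hF : ∀ t ∈ Set.Icc (0:ℝ) 1, HasDerivAt F (h' (γ t)).re t := by
    intro t ht
    have h1 : HasDerivAt (fun t => h (γ t)) (h' (γ t) * (b - a)) t :=
      (hd _ (hγpos t ht)).comp t (hγ t)
    have h2 := Complex.reCLM.hasFDerivAt.comp_hasDerivAt t (h1.div_const (b - a))
    rw [mul_div_cancel_right₀ _ hsub] at h2
    exact h2
  obtain ⟨s, hs, he⟩ := exists_hasDerivAt_eq_slope F (fun t => (h' (γ t)).re) (zero_lt_one)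
    (fun t ht => (hF t ht).continuousAt.continuousWithinAt)
    (fun t ht => hF t ⟨ht.1.le, ht.2.le⟩)
  have : F 1 = F 0 := by simp [F, γ, hab]
  rw [this] at he
  have := hpos _ (hγpos s ⟨hs.1.le, hs.2.le⟩)
  simp at he
  linarith

lemma aux_open : IsOpen {w : ℂ | 0 < w.re} := isOpen_lt continuous_const Complex.continuous_re

lemma aux_speed (P P' h : ℂ → ℂ) (hP : ∀ w : ℂ, 0 < w.re → HasDerivAt P (P' w) w)
    (hpos : ∀ w : ℂ, 0 < w.re → 0 < (P w).re)
    (hh : ∀ w : ℂ, 0 < w.re → HasDerivAt h (P w)⁻¹ w)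
    (flow : ∀ w : ℂ, 0 < w.re → ∃ y : ℝ → ℂ, (∀ t, 0 < (y t).re) ∧ y 0 = w ∧
      ∀ t, HasDerivAt y (P (y t)) t) (a : ℂ) (ha : 0 < a.re) :
    a.re * (P' a).re = (P a).re := by
  have hP0 : ∀ w : ℂ, 0 < w.re → P w ≠ 0 := by
    intro w hw h0
    have := hpos w hw
    rw [h0] at this; simp at this
  have hinv : ∀ w : ℂ, 0 < w.re → 0 < ((P w)⁻¹).re := by
    intro w hw
    rw [Complex.inv_re]
    exact div_pos (hpos w hw) (Complex.normSq_pos.2 (hP0 w hw))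
  have hinj := aux_inj h (fun w => (P w)⁻¹) hh hinv
  choose! y hy1 hy2 hy3 using flow
  have hconj : ∀ w : ℂ, 0 < w.re → ∀ t : ℝ, h (y w t) = h w + t := by
    intro w hw t
    have hd : ∀ t : ℝ, HasDerivAt (fun t : ℝ => h (y w t) - t) 0 t := by
      intro t
      have h1 : HasDerivAt (fun t : ℝ => h (y w t)) ((P (y w t))⁻¹ * P (y w t)) t :=
        (hh _ (hy1 w hw t)).comp t (hy3 w hw t)
      rw [inv_mul_cancel₀ (hP0 _ (hy1 w hw t))] at h1
      have := h1.sub (Complex.ofRealCLM.hasDerivAt (x := t))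
      exact this.congr_deriv (by simp)
    have := is_const_of_deriv_eq_zero (fun t => (hd t).differentiableAt)
      (fun t => (hd t).deriv) t 0
    simp only [hy2 w hw] at this
    simp at this
    linear_combination this
  have hder : ∀ t : ℝ, ∀ w : ℂ, 0 < w.re →
      HasDerivAt (fun w => y w t) (P (y w t) / P w) w := by
    intro t w hw
    set b := y w t with hb
    have hbp : 0 < b.re := hy1 w hw t
    have hstrict : HasStrictDerivAt h (P b)⁻¹ b := by
      apply hasStrictDerivAt_of_hasDerivAt_of_continuousAt (f' := fun w => (P w)⁻¹)
      · filter_upwards [aux_open.mem_nhds hbp] with x hx using hh x hx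
      · exact (hP b hbp).continuousAt.inv₀ (hP0 b hbp)
    have hn : (P b)⁻¹ ≠ 0 := inv_ne_zero (hP0 b hbp)
    set g := hstrict.localInverse h _ b hn with hg
    have hgd : HasDerivAt g ((P b)⁻¹)⁻¹ (h b) := (hstrict.to_localInverse hn).hasDerivAt
    have hgb : g (h b) = b := (hstrict.eventually_left_inverse hn).self_of_nhds
    have hgr : ∀ᶠ x in nhds (h b), h (g x) = x := hstrict.eventually_right_inverse hn
    have hgp : ∀ᶠ x in nhds (h b), 0 < (g x).re := by
      have := hgd.continuousAt
      refine this.eventually_mem (s := {w : ℂ | 0 < w.re}) ?_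
      rw [hgb]
      exact aux_open.mem_nhds hbp
    have hbt : h b = h w + t := hconj w hw t
    have hq : HasDerivAt (fun w => h w + t) (P w)⁻¹ w := (hh w hw).add_const _
    have hq2 : Filter.Tendsto (fun w => h w + t) (nhds w) (nhds (h b)) := by
      rw [hbt]; exact hq.continuousAt
    have hev : (fun w => y w t) =ᶠ[nhds w] (fun w => g (h w + t)) := by
      filter_upwards [hq2.eventually hgr, hq2.eventually hgp, aux_open.mem_nhds hw] with x h1 h2 h3
      apply hinj _ _ (hy1 x h3 t) h2
      rw [h1, hconj x h3 t]
    have hcomp : HasDerivAt (fun w => g (h w + t)) (((P b)⁻¹)⁻¹ * (P w)⁻¹) w := by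
      refine HasDerivAt.comp w (h₂ := g) ?_ hq
      rw [← hbt]; exact hgd
    refine (hcomp.congr_of_eventuallyEq hev).congr_deriv ?_
    rw [inv_inv, div_eq_mul_inv]
  have hineq : ∀ t : ℝ, ‖P (y a t)‖ * a.re ≤ ‖P a‖ * (y a t).re := by
    intro t
    have := aux_schwarz_pick (fun w => y w t) a _ ha (fun w hw => hy1 w hw t)
      (fun w hw => (hder t w hw).differentiableAt) (hder t a ha)
    rw [norm_div, div_mul_eq_mul_div, div_le_iff₀ (norm_pos_iff.2 (hP0 a ha))] at this
    linarith
  let K : ℝ → ℝ := fun t => ((P (y a t)).re ^ 2 + (P (y a t)).im ^ 2) * a.re ^ 2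
    - ‖P a‖ ^ 2 * (y a t).re ^ 2
  have hnorm : ∀ z : ℂ, z.re ^ 2 + z.im ^ 2 = ‖z‖ ^ 2 := by
    intro z
    rw [← Complex.normSq_eq_norm_sq, Complex.normSq_apply]; ring
  have hK0 : K 0 = 0 := by
    simp only [K, hnorm, hy2 a ha]; ring
  have hKle : ∀ t, K t ≤ K 0 := by
    intro t
    rw [hK0]
    simp only [K, hnorm]
    have := pow_le_pow_left₀ (by positivity) (hineq t) 2
    rw [mul_pow, mul_pow] at this
    linarith
  have hy' : HasDerivAt (y a) (P a) 0 := by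
    have := hy3 a ha 0
    rwa [hy2 a ha] at this
  have hPy : HasDerivAt (fun t => P (y a t)) (P' a * P a) 0 := by
    refine HasDerivAt.comp (0:ℝ) (h₂ := P) ?_ hy'
    rw [hy2 a ha]; exact hP a ha
  have e1 : HasDerivAt (fun t => (P (y a t)).re) (P' a * P a).re 0 :=
    Complex.reCLM.hasFDerivAt.comp_hasDerivAt (0:ℝ) hPy
  have e2 : HasDerivAt (fun t => (P (y a t)).im) (P' a * P a).im 0 :=
    Complex.imCLM.hasFDerivAt.comp_hasDerivAt (0:ℝ) hPy
  have e3 : HasDerivAt (fun t => (y a t).re) (P a).re 0 :=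
    Complex.reCLM.hasFDerivAt.comp_hasDerivAt (0:ℝ) hy'
  have hK := (((e1.pow 2).add (e2.pow 2)).mul_const (a.re ^ 2)).sub
    ((e3.pow 2).const_mul (‖P a‖ ^ 2))
  have hmax : IsLocalMax K 0 := Filter.Eventually.of_forall hKle
  have hz := hmax.hasDerivAt_eq_zero hK
  simp only [hy2 a ha, ← hnorm] at hz
  simp at hz
  have hnz : (P a).re ^ 2 + (P a).im ^ 2 ≠ 0 := by
    have := hpos a ha
    positivity
  have : ((P a).re ^ 2 + (P a).im ^ 2) * (2 * a.re) * (a.re * (P' a).re - (P a).re) = 0 := by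
    linear_combination hz
  have h2 : (2 * a.re) ≠ 0 := by positivity
  have := (mul_eq_zero.1 this).resolve_left (mul_ne_zero hnz h2)
  linarith

lemma aux_affine (P : ℂ → ℂ) (hP : DifferentiableOn ℂ P {w : ℂ | 0 < w.re})
    (hpos : ∀ w : ℂ, 0 < w.re → 0 ≤ (P w).re)
    (he : ∀ w : ℂ, 0 < w.re → w.re * (deriv P w).re = (P w).re) :
    ∃ A B : ℝ, 0 ≤ A ∧ ∀ w : ℂ, 0 < w.re → P w = A * w + Complex.I * B := by
  have hconv : Convex ℝ {w : ℂ | 0 < w.re} := convex_halfSpace_re_gt 0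
  have hne : Set.Nonempty {w : ℂ | 0 < w.re} := ⟨1, by simp⟩
  have hconn : IsConnected {w : ℂ | 0 < w.re} := ⟨hne, hconv.isPreconnected⟩
  have hP1 := hP.deriv aux_open
  have hP2 := hP1.deriv aux_open
  have d0 : ∀ w : ℂ, 0 < w.re → HasDerivAt P (deriv P w) w := fun w hw =>
    (hP.differentiableAt (aux_open.mem_nhds hw)).hasDerivAt
  have d1 : ∀ w : ℂ, 0 < w.re → HasDerivAt (deriv P) (deriv (deriv P) w) w := fun w hw =>
    (hP1.differentiableAt (aux_open.mem_nhds hw)).hasDerivAt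
  have hre : ∀ w ∈ {w : ℂ | 0 < w.re}, (deriv (deriv P) w).re = 0 := by
    intro w hw
    have hw' : 0 < w.re := hw
    have hγ : HasDerivAt (fun s : ℝ => w + (s:ℂ)) 1 0 := by
      have := (Complex.ofRealCLM.hasDerivAt (x := (0:ℝ))).const_add w
      exact this.congr_deriv (by simp)
    have c0 : HasDerivAt (fun s : ℝ => P (w + (s:ℂ))) (deriv P w * 1) 0 := by
      refine HasDerivAt.comp (0:ℝ) (h₂ := P) ?_ hγ
      simpa using d0 w hw
    have c1 : HasDerivAt (fun s : ℝ => deriv P (w + (s:ℂ))) (deriv (deriv P) w * 1) 0 := by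
      refine HasDerivAt.comp (0:ℝ) (h₂ := deriv P) ?_ hγ
      simpa using d1 w hw
    have e0 : HasDerivAt (fun s : ℝ => (P (w + (s:ℂ))).re) (deriv P w * 1).re 0 :=
      Complex.reCLM.hasFDerivAt.comp_hasDerivAt (0:ℝ) c0
    have e1 : HasDerivAt (fun s : ℝ => (deriv P (w + (s:ℂ))).re) (deriv (deriv P) w * 1).re 0 :=
      Complex.reCLM.hasFDerivAt.comp_hasDerivAt (0:ℝ) c1
    have eu : HasDerivAt (fun s : ℝ => (w + (s:ℂ)).re) (1:ℂ).re 0 :=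
      Complex.reCLM.hasFDerivAt.comp_hasDerivAt (0:ℝ) hγ
    have hev : (fun s : ℝ => (P (w + (s:ℂ))).re) =ᶠ[nhds 0]
        ((fun s : ℝ => (w + (s:ℂ)).re) * (fun s : ℝ => (deriv P (w + (s:ℂ))).re)) := by
      have := eu.continuousAt.eventually_mem (s := Set.Ioi 0) (Ioi_mem_nhds (by simpa using hw'))
      filter_upwards [this] with s hs
      exact (he _ hs).symm
    have := e0.unique ((eu.mul e1).congr_of_eventuallyEq hev)
    simp at this
    exact this.resolve_left hw'.ne'
  obtain ⟨k, hk⟩ : ∃ k : ℝ, ∀ w ∈ {w : ℂ | 0 < w.re}, deriv (deriv P) w = Complex.I * k := by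
    obtain ⟨k, hk⟩ := (hP2.analyticOnNhd aux_open).eq_re_add_const_mul_I_of_re_eq_const hre
      aux_open hconn
    exact ⟨k, fun w hw => by rw [hk w hw]; simp [mul_comm]⟩
  obtain ⟨β, hβ⟩ := aux_open.exists_is_const_of_deriv_eq_zero hconv.isPreconnected
    (f := fun w => deriv P w - Complex.I * k * w)
    (hP1.sub (by fun_prop)) (by
      intro w hw
      have := (d1 w hw).sub ((hasDerivAt_id w).const_mul (Complex.I * k))
      rw [hk w hw, mul_one, sub_self] at this
      exact this.deriv)
  have hβ' : ∀ w : ℂ, 0 < w.re → deriv P w = Complex.I * k * w + β := fun w hw => by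
    linear_combination hβ w hw
  obtain ⟨γ, hγ⟩ := aux_open.exists_is_const_of_deriv_eq_zero hconv.isPreconnected
    (f := fun w => P w - (Complex.I * k / 2 * w ^ 2 + β * w))
    (hP.sub (by fun_prop)) (by
      intro w hw
      have h1 : HasDerivAt (fun w : ℂ => Complex.I * k / 2 * w ^ 2 + β * w)
          (Complex.I * k * w + β) w := by
        have := (((hasDerivAt_id w).pow 2).const_mul (Complex.I * k / 2)).add
          ((hasDerivAt_id w).const_mul β)
        refine this.congr_deriv ?_
        simp; ring
      have := (d0 w hw).sub h1
      rw [hβ' w hw, sub_self] at this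
      exact this.deriv)
  have hγ' : ∀ w : ℂ, 0 < w.re → P w = Complex.I * k / 2 * w ^ 2 + β * w + γ := fun w hw => by
    linear_combination hγ w hw
  have key : ∀ v : ℝ, γ.re = β.im * v ∧ 0 ≤ β.re - k * v := by
    intro v
    have hw : 0 < ((⟨1, v⟩ : ℂ)).re := by simp
    have h1 := he _ hw
    have h2 := hpos _ hw
    rw [← h1] at h2
    rw [hβ' _ hw, hγ' _ hw] at h1
    rw [hβ' _ hw] at h2
    simp [pow_two] at h1 h2
    constructor <;> linarith
  have hγ0 : γ.re = 0 := by simpa using (key 0).1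
  have hβ0 : β.im = 0 := by have := (key 1).1; linarith
  have hβp : 0 ≤ β.re := by simpa using (key 0).2
  have hk0 : k = 0 := by
    by_contra hk0
    have := (key ((β.re + 1) / k)).2
    rw [mul_div_cancel₀ _ hk0] at this
    linarith
  refine ⟨β.re, γ.im, hβp, fun w hw => ?_⟩
  rw [hγ' w hw, hk0]
  apply Complex.ext <;> simp [hγ0, hβ0]

lemma aux_exp (A B : ℝ) (hA : 0 ≤ A) (w : ℂ) (hw : 0 < w.re) :
    ∃ y : ℝ → ℂ, (∀ t, 0 < (y t).re) ∧ y 0 = w ∧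
      ∀ t, HasDerivAt y (A * y t + Complex.I * B) t := by
  rcases hA.eq_or_lt with h | h
  · subst h
    refine ⟨fun t => w + t * (Complex.I * B), ?_, by simp, ?_⟩
    · intro t; simpa using hw
    · intro t
      have := ((Complex.ofRealCLM.hasDerivAt (x := t)).mul_const (Complex.I * B)).const_add w
      exact this.congr_deriv (by simp)
  · have hA0 : (A:ℂ) ≠ 0 := by exact_mod_cast h.ne'
    refine ⟨fun t => ((Real.exp (A * t) : ℝ) : ℂ) * (w + Complex.I * ((B / A : ℝ) : ℂ))
      - Complex.I * ((B / A : ℝ) : ℂ), ?_, by simp, ?_⟩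
    · intro t
      have : 0 < Real.exp (A * t) * w.re := mul_pos (Real.exp_pos _) hw
      simpa [-Complex.ofReal_exp, -Complex.ofReal_div, -Complex.ofReal_mul] using this
    · intro t
      have h1 : HasDerivAt (fun t : ℝ => Real.exp (A * t)) (Real.exp (A * t) * A) t := by
        have := ((hasDerivAt_id t).const_mul A).exp
        simpa using this
      have h2 := (h1.ofReal_comp.mul_const (w + Complex.I * ((B / A : ℝ) : ℂ))).sub_const
        (Complex.I * ((B / A : ℝ) : ℂ))
      refine h2.congr_deriv ?_
      push_cast
      field_simp
      ring

lemma aux_cay1 (z : ℂ) (hz : ‖z‖ < 1) : 0 < ((1 + z) / (1 - z)).re := by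
  simpa using aux_re_pos 1 z (by simp) hz

lemma aux_cay2 (w : ℂ) (hw : 0 < w.re) : ‖(w - 1) / (w + 1)‖ < 1 := by
  simpa using aux_mem_ball 1 (by simp) w hw

lemma aux_add_one_ne (w : ℂ) (hw : 0 < w.re) : w + 1 ≠ 0 := by
  intro h
  have := congrArg Complex.re h
  simp at this; linarith

lemma aux_cay_deriv (w : ℂ) (hw : 0 < w.re) :
    HasDerivAt (fun w : ℂ => (w - 1) / (w + 1)) (2 / (w + 1) ^ 2) w := by
  have := ((hasDerivAt_id w).sub_const 1).div ((hasDerivAt_id w).add_const 1)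
    (aux_add_one_ne w hw)
  refine this.congr_deriv ?_
  congr 1
  simp; ring

lemma aux_cay_deriv' (z : ℂ) (hz : ‖z‖ < 1) :
    HasDerivAt (fun z : ℂ => (1 + z) / (1 - z)) (2 / (1 - z) ^ 2) z := by
  have := ((hasDerivAt_id z).const_add 1).div ((hasDerivAt_id z).const_sub 1)
    (aux_one_sub_ne z hz)
  refine this.congr_deriv ?_
  congr 1
  simp; ring

lemma aux_cay_inv (z : ℂ) (hz : ‖z‖ < 1) :
    ((1 + z) / (1 - z) - 1) / ((1 + z) / (1 - z) + 1) = z := by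
  have h1 := aux_one_sub_ne z hz
  have h2 := aux_add_one_ne _ (aux_cay1 z hz)
  rw [div_eq_iff h2]
  field_simp
  ring

lemma aux_cay_inv' (w : ℂ) (hw : 0 < w.re) :
    (1 + (w - 1) / (w + 1)) / (1 - (w - 1) / (w + 1)) = w := by
  have h1 := aux_one_sub_ne _ (aux_cay2 w hw)
  have h2 := aux_add_one_ne _ hw
  rw [div_eq_iff h1]
  field_simp
  ring

lemma aux_cay_sub (w : ℂ) (hw : 0 < w.re) :
    1 - (w - 1) / (w + 1) = 2 / (w + 1) := by
  have h2 := aux_add_one_ne _ hw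
  field_simp
  ring

/-- the vector field `(1-z)² p̃(z)` is complete in the unit disk if and
only if the Herglotz function `p̃` is of the automorphism type
`p̃(z) = A (1+z)/(1-z) + iB` with `A ≥ 0`, `B ∈ ℝ`. -/
theorem stmt_4 (p : ℂ → ℂ)
    (hol : DifferentiableOn ℂ p (ball (0 : ℂ) 1))
    (hre : ∀ z ∈ ball (0 : ℂ) 1, 0 ≤ (p z).re) :
    (∀ z ∈ ball (0 : ℂ) 1, ∃ x : ℝ → ℂ,
      (∀ t : ℝ, x t ∈ ball (0 : ℂ) 1) ∧ x 0 = z ∧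
      (∀ t : ℝ, HasDerivAt x ((1 - x t) ^ 2 * p (x t)) t))
    ↔ (∃ A B : ℝ, 0 ≤ A ∧ ∀ z ∈ ball (0 : ℂ) 1,
        p z = (A : ℂ) * (1 + z) / (1 - z) + Complex.I * B) := by
  constructor
  · intro hflow
    by_cases hz : ∃ z₀ ∈ ball (0 : ℂ) 1, (p z₀).re = 0
    · obtain ⟨z₀, hz₀, hp0⟩ := hz
      have han : AnalyticOnNhd ℂ p (ball (0 : ℂ) 1) := hol.analyticOnNhd isOpen_ball
      rcases han.is_constant_or_isOpen (convex_ball (0:ℂ) 1).isPreconnected with ⟨c, hc⟩ | ho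
      · refine ⟨0, c.im, le_rfl, fun z hz => ?_⟩
        have : c.re = 0 := by rw [← hc z₀ hz₀]; exact hp0
        rw [hc z hz]
        apply Complex.ext <;> simp [this]
      · exfalso
        have h1 := Complex.isOpenMap_re _ (ho _ subset_rfl isOpen_ball)
        have h2 : (0:ℝ) ∈ Complex.re '' (p '' ball (0 : ℂ) 1) :=
          ⟨p z₀, ⟨z₀, hz₀, rfl⟩, hp0⟩
        obtain ⟨ε, hε, hsub⟩ := Metric.isOpen_iff.1 h1 0 h2
        have h3 : (-(ε / 2)) ∈ ball (0:ℝ) ε := by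
          rw [mem_ball_zero_iff, norm_neg, Real.norm_of_nonneg (by positivity)]
          linarith
        obtain ⟨_, ⟨z, hz, rfl⟩, h4⟩ := hsub h3
        have := hre z hz
        linarith
    · have hppos : ∀ z ∈ ball (0 : ℂ) 1, 0 < (p z).re := fun z hz' =>
        lt_of_le_of_ne (hre z hz') (fun h => hz ⟨z, hz', h.symm⟩)
      have hp0 : ∀ z ∈ ball (0 : ℂ) 1, p z ≠ 0 := by
        intro z hz' h
        have := hppos z hz'
        rw [h] at this; simp at this
      have hfd : DifferentiableOn ℂ (fun z => ((1 - z) ^ 2 * p z)⁻¹) (ball (0 : ℂ) 1) := by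
        apply DifferentiableOn.inv
        · exact DifferentiableOn.mul (by fun_prop) hol
        · intro z hz'
          exact mul_ne_zero (pow_ne_zero _ (aux_one_sub_ne z (mem_ball_zero_iff.1 hz')))
            (hp0 z hz')
      obtain ⟨H, hH⟩ := hfd.isExactOn_ball
      let P : ℂ → ℂ := fun w => 2 * p ((w - 1) / (w + 1))
      have hmem : ∀ w : ℂ, 0 < w.re → (w - 1) / (w + 1) ∈ ball (0 : ℂ) 1 := fun w hw =>
        mem_ball_zero_iff.2 (aux_cay2 w hw)
      have hPpos : ∀ w : ℂ, 0 < w.re → 0 < (P w).re := by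
        intro w hw
        have := hppos _ (hmem w hw)
        simp only [P]
        simpa using this
      have hPd : ∀ w : ℂ, 0 < w.re → DifferentiableAt ℂ P w := by
        intro w hw
        have h1 : DifferentiableAt ℂ p ((w - 1) / (w + 1)) :=
          hol.differentiableAt (isOpen_ball.mem_nhds (hmem w hw))
        exact (DifferentiableAt.comp w h1 (aux_cay_deriv w hw).differentiableAt).const_mul 2
      have hhd : ∀ w : ℂ, 0 < w.re →
          HasDerivAt (fun w => H ((w - 1) / (w + 1))) (P w)⁻¹ w := by
        intro w hw
        have h1 := (hH _ (hmem w hw)).comp w (aux_cay_deriv w hw)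
        refine h1.congr_deriv ?_
        beta_reduce
        rw [aux_cay_sub w hw]
        have h2 := aux_add_one_ne w hw
        have h3 := hp0 _ (hmem w hw)
        simp only [P]
        generalize p ((w - 1) / (w + 1)) = q at *
        field_simp
      have hfl : ∀ w : ℂ, 0 < w.re → ∃ y : ℝ → ℂ, (∀ t, 0 < (y t).re) ∧ y 0 = w ∧
          ∀ t, HasDerivAt y (P (y t)) t := by
        intro w hw
        obtain ⟨x, hx1, hx2, hx3⟩ := hflow _ (hmem w hw)
        refine ⟨fun t => (1 + x t) / (1 - x t), fun t => aux_cay1 _ (mem_ball_zero_iff.1 (hx1 t)),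
          ?_, ?_⟩
        · simp only [hx2]
          exact aux_cay_inv' w hw
        · intro t
          have hxt := mem_ball_zero_iff.1 (hx1 t)
          have h1 := (aux_cay_deriv' _ hxt).comp t (hx3 t)
          refine h1.congr_deriv ?_
          simp only [P]
          rw [aux_cay_inv _ hxt]
          have := aux_one_sub_ne _ hxt
          field_simp
      have hspeed := aux_speed P (deriv P) _ (fun w hw => (hPd w hw).hasDerivAt) hPpos hhd hfl
      obtain ⟨A, B, hA, hAB⟩ := aux_affine P
        (fun w hw => (hPd w hw).differentiableWithinAt) (fun w hw => (hPpos w hw).le) hspeed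
      refine ⟨A / 2, B / 2, by positivity, fun z hz' => ?_⟩
      have hz1 := mem_ball_zero_iff.1 hz'
      have := hAB _ (aux_cay1 z hz1)
      simp only [P] at this
      rw [aux_cay_inv z hz1] at this
      push_cast
      linear_combination this / 2
  · rintro ⟨A, B, hA, hp⟩ z hz
    have hz1 := mem_ball_zero_iff.1 hz
    obtain ⟨y, hy1, hy2, hy3⟩ := aux_exp (2 * A) (2 * B) (by positivity) _ (aux_cay1 z hz1)
    refine ⟨fun t => (y t - 1) / (y t + 1),
      fun t => mem_ball_zero_iff.2 (aux_cay2 _ (hy1 t)), ?_, ?_⟩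
    · simp only [hy2]
      exact aux_cay_inv z hz1
    · intro t
      have h1 := (aux_cay_deriv _ (hy1 t)).comp t (hy3 t)
      refine h1.congr_deriv ?_
      rw [hp _ (mem_ball_zero_iff.2 (aux_cay2 _ (hy1 t))), mul_div_assoc,
        aux_cay_inv' _ (hy1 t), aux_cay_sub _ (hy1 t)]
      have := aux_add_one_ne _ (hy1 t)
      push_cast
      field_simp
end

section
/- Let A ≥ 0, B ∈ ℝ, and k ∈ ℝ with k ≠ 0 satisfy k < 2(−B − √(A² + B²)) or k > 2(−B + √(A² + B²)), so that D := 4A² − 4Bk − k² < 0 (elliptic case). Let z ∈ 𝔻 be a point that is not a zero of the vector field g(w) = (w − 1)²(A(1+w)/(1−w) + iB) − ikw, and let ψ : [0,∞) → 𝔻 be the solution of ψ'(t) = g(ψ(t)), ψ(0) = z. Define φ(t) = e^{ikt} ψ(t). Then there exists t₀ > 0 with φ(t₀) = z and φ'(t₀) = φ'(0) (i.e., the trajectory t ↦ φ(t) is a closed curve) if and only if k/√(−4A² + 4Bk + k²) is rational. -/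
open Complex Metric Real Set

lemma aux_F (c2 c1 c0 z : ℂ) (ω : ℝ) (hω : 0 < ω)
    (hdisc : c1 ^ 2 - 4 * c0 * c2 = -(ω : ℂ) ^ 2)
    (ψ : ℝ → ℂ) (hψ0 : ψ 0 = z)
    (hψball : ∀ t : ℝ, 0 ≤ t → ψ t ∈ ball (0 : ℂ) 1)
    (hψ : ∀ t : ℝ, 0 ≤ t → HasDerivWithinAt ψ (c2 * ψ t ^ 2 + c1 * ψ t + c0) (Set.Ici 0) t)
    (T : ℝ) (hT : 0 ≤ T) :
    ψ T * (((Real.cos (ω * T / 2) : ℝ) : ℂ) + ((2 / ω * Real.sin (ω * T / 2) : ℝ) : ℂ) * (-c2 * z - c1 / 2))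
      = z * ((Real.cos (ω * T / 2) : ℝ) : ℂ) + ((2 / ω * Real.sin (ω * T / 2) : ℝ) : ℂ) * (c1 / 2 * z + c0) := by
  have hω' : (ω : ℂ) ≠ 0 := by exact_mod_cast hω.ne'
  set C : ℝ → ℂ := fun t => ((Real.cos (ω * t / 2) : ℝ) : ℂ) with hC
  set S : ℝ → ℂ := fun t => ((2 / ω * Real.sin (ω * t / 2) : ℝ) : ℂ) with hS
  have hlin : ∀ t : ℝ, HasDerivAt (fun t : ℝ => ω * t / 2) (ω / 2) t := by
    intro t
    simpa using ((hasDerivAt_id t).const_mul ω).div_const 2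
  have dC : ∀ t, HasDerivAt C (-(ω : ℂ) ^ 2 / 4 * S t) t := by
    intro t
    have := ((hlin t).cos).ofReal_comp
    convert this using 1
    simp only [hS]
    push_cast
    field_simp
    ring
  have dS : ∀ t, HasDerivAt S (C t) t := by
    intro t
    have := (((hlin t).sin).const_mul (2 / ω)).ofReal_comp
    convert this using 1
    simp only [hC]
    push_cast
    field_simp
  set F : ℝ → ℂ := fun t => ψ t * (C t + S t * (-c2 * z - c1 / 2)) -
    (z * C t + S t * (c1 / 2 * z + c0)) with hF
  have dF : ∀ t, 0 ≤ t → HasDerivWithinAt F ((c2 * ψ t + c1 / 2) * F t) (Set.Ici 0) t := by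
    intro t ht
    have h1 := (hψ t ht).mul (((dC t).add ((dS t).mul_const (-c2 * z - c1 / 2))).hasDerivWithinAt (s := Set.Ici 0))
    have h2 := (((dC t).const_mul z).add ((dS t).mul_const (c1 / 2 * z + c0))).hasDerivWithinAt (s := Set.Ici 0)
    refine (h1.sub h2).congr_deriv ?_
    have hd : (ω : ℂ) ^ 2 = 4 * c0 * c2 - c1 ^ 2 := by linear_combination hdisc
    simp only [hF, hd, Pi.add_apply]
    ring
  have key : ∀ t ∈ Icc (0 : ℝ) T, F t = 0 := by
    refine eq_zero_of_abs_deriv_le_mul_abs_self_of_eq_zero_right (f' := fun t => (c2 * ψ t + c1 / 2) * F t)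
      (K := ‖c2‖ + ‖c1 / 2‖) ?_ ?_ ?_ ?_
    · intro t ht
      exact (dF t ht.1).continuousWithinAt.mono (fun x hx => hx.1)
    · intro t ht
      exact (dF t ht.1).mono (Set.Ici_subset_Ici.2 ht.1)
    · simp [hF, hC, hS, hψ0]
    · intro t ht
      rw [norm_mul]
      gcongr
      refine (norm_add_le _ _).trans ?_
      gcongr
      rw [norm_mul]
      have := hψball t ht.1
      rw [mem_ball_zero_iff] at this
      nlinarith [norm_nonneg c2]
  have := key T ⟨hT, le_rfl⟩
  exact sub_eq_zero.1 this

lemma aux_period (c2 c1 c0 z : ℂ) (ω : ℝ) (hω : 0 < ω)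
    (hdisc : c1 ^ 2 - 4 * c0 * c2 = -(ω : ℂ) ^ 2)
    (ψ : ℝ → ℂ) (hψ0 : ψ 0 = z)
    (hψball : ∀ t : ℝ, 0 ≤ t → ψ t ∈ ball (0 : ℂ) 1)
    (hψ : ∀ t : ℝ, 0 ≤ t → HasDerivWithinAt ψ (c2 * ψ t ^ 2 + c1 * ψ t + c0) (Set.Ici 0) t)
    (hz : c2 * z ^ 2 + c1 * z + c0 ≠ 0)
    (T : ℝ) (hT : 0 ≤ T) : ψ T = z ↔ Real.sin (ω * T / 2) = 0 := by
  have h := aux_F c2 c1 c0 z ω hω hdisc ψ hψ0 hψball hψ T hT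
  constructor
  · intro hT
    rw [hT] at h
    have h2 : ((2 / ω * Real.sin (ω * T / 2) : ℝ) : ℂ) * (c2 * z ^ 2 + c1 * z + c0) = 0 := by
      linear_combination -h
    have h3 := (mul_eq_zero.1 h2).resolve_right hz
    have h4 : 2 / ω * Real.sin (ω * T / 2) = 0 := by exact_mod_cast h3
    exact (mul_eq_zero.1 h4).resolve_left (by positivity)
  · intro hs
    have hc : Real.cos (ω * T / 2) ≠ 0 := by
      intro hc
      have := Real.sin_sq_add_cos_sq (ω * T / 2)
      rw [hs, hc] at this
      norm_num at this
    rw [hs] at h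
    have hc' : ((Real.cos (ω * T / 2) : ℝ) : ℂ) ≠ 0 := by exact_mod_cast hc
    apply mul_right_cancel₀ hc'
    simpa using h

theorem stmt_5 (A B k : ℝ) (hA : 0 ≤ A) (hk : k ≠ 0)
    (hell : k < 2 * (-B - Real.sqrt (A ^ 2 + B ^ 2)) ∨
            k > 2 * (-B + Real.sqrt (A ^ 2 + B ^ 2)))
    (g : ℂ → ℂ)
    (hg : ∀ w : ℂ, g w = (w - 1) ^ 2 * ((A : ℂ) * (1 + w) / (1 - w) + Complex.I * B)
      - Complex.I * k * w)
    (z : ℂ) (hz : z ∈ ball (0 : ℂ) 1) (hznz : g z ≠ 0)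
    (ψ : ℝ → ℂ) (hψ0 : ψ 0 = z)
    (hψball : ∀ t : ℝ, 0 ≤ t → ψ t ∈ ball (0 : ℂ) 1)
    (hψ : ∀ t : ℝ, 0 ≤ t → HasDerivWithinAt ψ (g (ψ t)) (Set.Ici 0) t)
    (φ : ℝ → ℂ) (hφ : ∀ t : ℝ, φ t = Complex.exp (Complex.I * k * t) * ψ t) :
    (∃ t₀ : ℝ, 0 < t₀ ∧ φ t₀ = z ∧
        derivWithin φ (Set.Ici 0) t₀ = derivWithin φ (Set.Ici 0) 0)
    ↔ ∃ q : ℚ, (q : ℝ) = k / Real.sqrt (-4 * A ^ 2 + 4 * B * k + k ^ 2) := by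
  have hpos : 0 < -4 * A ^ 2 + 4 * B * k + k ^ 2 := by
    have h1 := Real.sqrt_nonneg (A ^ 2 + B ^ 2)
    have h2 := Real.sq_sqrt (show 0 ≤ A ^ 2 + B ^ 2 by positivity)
    rcases hell with h | h <;> nlinarith
  set ω := Real.sqrt (-4 * A ^ 2 + 4 * B * k + k ^ 2) with hωdef
  have hω : 0 < ω := Real.sqrt_pos.2 hpos
  have hω2 : ω ^ 2 = -4 * A ^ 2 + 4 * B * k + k ^ 2 := Real.sq_sqrt hpos.le
  have hω2c : (ω : ℂ) ^ 2 = -4 * A ^ 2 + 4 * B * k + k ^ 2 := by exact_mod_cast hω2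
  have hI := Complex.I_sq
  have hg' : ∀ w ∈ ball (0 : ℂ) 1, g w = (-A + I * B) * w ^ 2 + (-(I * (2 * B + k))) * w + (A + I * B) := by
    intro w hw
    have : (1 - w) ≠ 0 := by
      intro h
      rw [mem_ball_zero_iff, ← sub_eq_zero.1 h] at hw
      simp at hw
    rw [hg]
    field_simp
    ring
  have hper : ∀ T, 0 ≤ T → (ψ T = z ↔ Real.sin (ω * T / 2) = 0) := by
    intro T hT
    refine aux_period (-A + I * B) (-(I * (2 * B + k))) (A + I * B) z ω hω ?_ ψ hψ0 hψball ?_ ?_ T hT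
    · rw [hω2c]
      linear_combination ((k : ℂ) ^ 2 + 4 * B * k) * hI
    · intro t ht
      rw [← hg' _ (hψball t ht)]
      exact hψ t ht
    · rwa [← hg' z hz]
  have hdφ : ∀ t, 0 ≤ t → derivWithin φ (Set.Ici 0) t =
      Complex.exp (I * k * t) * (I * k * ψ t + g (ψ t)) := by
    intro t ht
    have h1 : HasDerivAt (fun t : ℝ => Complex.exp (I * k * t)) (Complex.exp (I * k * t) * (I * k)) t := by
      have := ((Complex.ofRealCLM.hasDerivAt (x := t)).const_mul (I * k)).cexp
      simpa using this
    have h2 := (h1.hasDerivWithinAt (s := Set.Ici 0)).mul (hψ t ht)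
    have h3 : φ = (fun t : ℝ => Complex.exp (I * k * t)) * ψ := by
      funext t; simp [hφ]
    rw [h3, h2.derivWithin (uniqueDiffOn_Ici 0 t ht)]
    ring
  constructor
  · rintro ⟨t, ht, h1, h2⟩
    rw [hdφ t ht.le, hdφ 0 le_rfl, hψ0, hg' z hz, hg' _ (hψball t ht.le)] at h2
    rw [hφ] at h1
    have hen : ‖Complex.exp (I * k * t)‖ = 1 := by
      have : I * k * t = ((k * t : ℝ) : ℂ) * I := by push_cast; ring
      rw [this, Complex.norm_exp_ofReal_mul_I]
    have hw := hψball t ht.le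
    rw [mem_ball_zero_iff] at hw
    set e := Complex.exp (I * k * t) with he
    set w := ψ t with hwdef
    simp only [Complex.ofReal_zero, mul_zero, Complex.exp_zero, one_mul] at h2
    have h3 : (e - 1) * ((A + I * B) + (A - I * B) * (e * w ^ 2)) = 0 := by
      rw [← h1] at h2
      linear_combination h2
    by_cases hab : (A : ℂ) + I * B = 0
    · have hA0 : A = 0 := by simpa using congrArg Complex.re hab
      have hB0 : B = 0 := by simpa using congrArg Complex.im hab
      have h5 : ω = |k| := by
        rw [hωdef, hA0, hB0, ← Real.sqrt_sq_eq_abs]; congr 1; ring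
      rw [h5]
      rcases lt_or_gt_of_ne hk with h | h
      · exact ⟨-1, by rw [abs_of_neg h]; field_simp; norm_num⟩
      · exact ⟨1, by rw [abs_of_pos h]; field_simp; norm_num⟩
    · have he1 : e = 1 := by
        rcases mul_eq_zero.1 h3 with h | h
        · exact sub_eq_zero.1 h
        · exfalso
          have h4 : (A : ℂ) + I * B = -((A - I * B) * (e * w ^ 2)) := by linear_combination h
          have h5 : ‖(A : ℂ) - I * B‖ = ‖(A : ℂ) + I * B‖ := by
            rw [← Complex.norm_conj]; simp
          have h6 := congrArg norm h4
          rw [norm_neg, norm_mul, norm_mul, norm_pow, hen, h5] at h6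
          have h7 := norm_pos_iff.2 hab
          have h8 : ‖w‖ ^ 2 < 1 := by nlinarith [norm_nonneg w]
          nlinarith
      rw [he1, one_mul] at h1
      have h6 := (hper t ht.le).1 h1
      obtain ⟨m, hm⟩ := Real.sin_eq_zero_iff.1 h6
      obtain ⟨n, hn⟩ := Complex.exp_eq_one_iff.1 (he ▸ he1)
      have hn' : k * t = n * (2 * π) := by
        have := congrArg Complex.im hn
        simpa using this
      refine ⟨n / m, ?_⟩
      have hm0 : (m : ℝ) ≠ 0 := by
        intro h0
        rw [h0] at hm
        have : 0 < ω * t := by positivity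
        linarith
      push_cast
      rw [div_eq_div_iff hm0 hω.ne']
      have : t * (n * ω - k * m) = 0 := by
        linear_combination (-2 * n) * hm - m * hn'
      linarith [(mul_eq_zero.1 this).resolve_left ht.ne']
  · rintro ⟨q, hq⟩
    have hd : (0 : ℝ) < q.den := by exact_mod_cast q.pos
    have hq2 : (q.num : ℝ) / q.den = k / ω := by rw [← hq]; exact_mod_cast q.num_div_den
    rw [div_eq_div_iff hd.ne' hω.ne'] at hq2
    have ht : 0 < 2 * π * q.den / ω := by positivity
    have hψt : ψ (2 * π * q.den / ω) = z := by
      rw [hper _ ht.le, Real.sin_eq_zero_iff]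
      refine ⟨q.den, ?_⟩
      push_cast
      field_simp
    have het : Complex.exp (I * k * ((2 * π * q.den / ω : ℝ) : ℂ)) = 1 := by
      rw [Complex.exp_eq_one_iff]
      refine ⟨q.num, ?_⟩
      have : k * (2 * π * q.den / ω) = q.num * (2 * π) := by
        field_simp
        linear_combination -hq2
      have h : (k : ℂ) * ((2 * π * q.den / ω : ℝ) : ℂ) = q.num * (2 * π) := by exact_mod_cast this
      linear_combination I * h
    refine ⟨_, ht, ?_, ?_⟩
    · rw [hφ, het, hψt, one_mul]
    · rw [hdφ _ ht.le, hdφ 0 le_rfl, het, hψt, hψ0]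
      simp
end

section
/- Let p̃ : 𝔻 → ℂ be holomorphic, continuous on the closed disk 𝔻̄, with Re p̃(z) > ε for some ε > 0 and all z ∈ 𝔻̄. Then for every k ∈ ℝ with k ≠ 0 there exists z₀ ∈ 𝔻 (i.e., |z₀| < 1) such that (1 − z₀)² p̃(z₀) = i k z₀. -/
open Complex Metric

lemma aux_re (z q : ℂ) (k : ℝ) (hz : ‖z‖ = 1) :
    z.re * ((1 - z) ^ 2 * q - Complex.I * k * z).re
      + z.im * ((1 - z) ^ 2 * q - Complex.I * k * z).im
      = - ((1 - z.re) ^ 2 + z.im ^ 2) * q.re := by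
  have h : z.re ^ 2 + z.im ^ 2 = 1 := by
    have := Complex.sq_norm z
    rw [hz, Complex.normSq_apply] at this
    linarith
  simp [pow_two]
  have h1 : z.im ^ 2 = 1 - z.re ^ 2 := by linarith
  have h2 : z.im ^ 3 = z.im * (1 - z.re ^ 2) := by rw [← h1]; ring
  ring_nf
  simp only [h1, h2]
  ring

/-- if `p̃` is holomorphic on the unit disk, continuous on the closed
disk, with `Re p̃ > ε > 0` on the closed disk, then for every `k ≠ 0` the generator
`(1-z)² p̃(z) - ikz` has a zero inside the unit disk, i.e. there is `z₀`, `|z₀| < 1`,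
with `(1 - z₀)² p̃(z₀) = i k z₀`. -/
theorem stmt_6 (p : ℂ → ℂ) (ε : ℝ) (hε : 0 < ε)
    (hol : DifferentiableOn ℂ p (ball (0 : ℂ) 1))
    (hcont : ContinuousOn p (closedBall (0 : ℂ) 1))
    (hre : ∀ z ∈ closedBall (0 : ℂ) 1, ε < (p z).re)
    (k : ℝ) (hk : k ≠ 0) :
    ∃ z₀ : ℂ, ‖z₀‖ < 1 ∧
      (1 - z₀) ^ 2 * p z₀ = Complex.I * k * z₀ := by
  by_contra! hno
  set G : ℂ → ℂ := fun z => (1 - z) ^ 2 * p z - Complex.I * k * z with hG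
  have hkey : ∀ z : ℂ, ‖z‖ = 1 → z.re * (G z).re + z.im * (G z).im
      = - ((1 - z.re) ^ 2 + z.im ^ 2) * (p z).re := fun z hz => aux_re z (p z) k hz
  have hG0 : ∀ z ∈ closedBall (0 : ℂ) 1, G z ≠ 0 := by
    intro z hz h0
    have hz' : ‖z‖ ≤ 1 := by simpa using hz
    rcases hz'.lt_or_eq with h | h
    · exact hno z h (sub_eq_zero.mp h0)
    · have h1 := hkey z h
      have h2 := hre z hz
      rw [h0] at h1
      have h3 : (1 - z.re) ^ 2 + z.im ^ 2 = 0 := by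
        have : ((1 - z.re) ^ 2 + z.im ^ 2) * (p z).re = 0 := by
          simp only [Complex.zero_re, Complex.zero_im, mul_zero, add_zero] at h1; linarith
        rcases mul_eq_zero.mp this with h | h
        · exact h
        · linarith
      have h4 : z = 1 := by
        apply Complex.ext
        · simp; nlinarith [sq_nonneg (1 - z.re), sq_nonneg z.im]
        · simp; nlinarith [sq_nonneg (1 - z.re), sq_nonneg z.im]
      subst h4
      simp [hG, hk] at h0
  have hreh : ∀ z : ℂ, (z / G z).re = (z.re * (G z).re + z.im * (G z).im) / normSq (G z) := by
    intro z; rw [Complex.div_re]; ring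
  have hGc : ContinuousOn G (closedBall (0 : ℂ) 1) := by
    simp only [hG]; fun_prop
  have hGd : DifferentiableOn ℂ G (ball (0 : ℂ) 1) := by
    simp only [hG]; fun_prop
  have hd : DiffContOnCl ℂ (fun z => Complex.exp (z / G z)) (ball (0 : ℂ) 1) := by
    refine ⟨?_, ?_⟩
    · exact (differentiableOn_id.div hGd fun z hz => hG0 z (ball_subset_closedBall hz)).cexp
    · rw [closure_ball _ one_ne_zero]
      exact (continuousOn_id.div hGc hG0).cexp
  have hle : ∀ z ∈ closure (ball (0 : ℂ) 1), ‖Complex.exp (z / G z)‖ ≤ 1 := by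
    intro z hz
    refine Complex.norm_le_of_forall_mem_frontier_norm_le isBounded_ball hd ?_ hz
    intro w hw
    rw [frontier_ball _ one_ne_zero] at hw
    have hw1 : ‖w‖ = 1 := by simpa using hw
    rw [Complex.norm_exp, Real.exp_le_one_iff, hreh, hkey w hw1]
    have := hre w (sphere_subset_closedBall hw)
    apply div_nonpos_of_nonpos_of_nonneg _ (normSq_nonneg _)
    have : 0 ≤ ((1 - w.re) ^ 2 + w.im ^ 2) * (p w).re :=
      mul_nonneg (by positivity) (by linarith)
    linarith
  have hmax : IsMaxOn (norm ∘ fun z => Complex.exp (z / G z)) (ball (0 : ℂ) 1) 0 := by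
    intro z hz
    simpa using hle z (subset_closure hz)
  have heq := Complex.norm_eqOn_closure_of_isPreconnected_of_isMaxOn
    (convex_ball (0 : ℂ) 1).isPreconnected isOpen_ball hd (by simp) hmax
  have hm : (-1 : ℂ) ∈ closedBall (0 : ℂ) 1 := by simp
  have h1 := heq (x := -1) (by rw [closure_ball _ one_ne_zero]; exact hm)
  simp only [Function.comp, Function.const, Complex.norm_exp, zero_div, Complex.zero_re] at h1
  have h2 := Real.exp_injective h1
  rw [hreh, hkey _ (by simp)] at h2
  have h3 := hre _ hm
  have h4 : 0 < normSq (G (-1)) := normSq_pos.mpr (hG0 _ hm)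
  rcases div_eq_zero_iff.mp h2 with h | h
  · norm_num at h
    linarith
  · linarith
end

section
/- Let p̃ : 𝔻 → ℂ be holomorphic, continuous on the closed disk 𝔻̄, with Re p̃(z) ≥ 0 on 𝔻̄, and let k ∈ ℝ, k ≠ 0. Suppose the Euclidean distance between the set p̃(𝕋) (the image of the unit circle 𝕋 = {z : |z| = 1} under p̃) and the set K_k(𝕋) = {−iks : s ≥ 1/4} (the image of 𝕋 under K_k(z) = ikz/(1−z)², a ray on the imaginary axis from ik/... through ∞; explicitly {ikr : r ≤ −1/4}) is greater than some ε > 0. Then there exists z₀ ∈ 𝔻 with (1 − z₀)² p̃(z₀) = i k z₀. -/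
open Complex Metric

/-- fixed point lemma via the maximum principle -/
lemma fixed_point_disk (g : ℂ → ℂ) (hg : DiffContOnCl ℂ g (ball (0:ℂ) 1))
    (hlt : ∀ z ∈ closedBall (0:ℂ) 1, ‖g z‖ < 1) : ∃ z : ℂ, ‖z‖ < 1 ∧ g z = z := by
  by_contra! hno
  have hne : ∀ z ∈ closure (ball (0:ℂ) 1), z - g z ≠ 0 := by
    rw [closure_ball _ one_ne_zero]
    intro z hz h
    have h' : g z = z := (sub_eq_zero.1 h).symm
    have h2 := hlt z hz
    rw [h'] at h2
    exact hno z h2 h'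
  have hid : DiffContOnCl ℂ (fun z : ℂ => z) (ball (0:ℂ) 1) := differentiable_id.diffContOnCl
  have hF : DiffContOnCl ℂ (fun z => cexp (-(z * (z - g z)⁻¹))) (ball (0:ℂ) 1) := by
    have h2 : DiffContOnCl ℂ (fun z => -(z * (z - g z)⁻¹)) (ball (0:ℂ) 1) :=
      (hid.smul ((hid.sub hg).inv hne)).neg
    exact Complex.differentiable_exp.comp_diffContOnCl h2
  have hb := Complex.norm_le_of_forall_mem_frontier_norm_le (C := Real.exp (-(1/2))) isBounded_ball hF
    (by
      rw [frontier_ball _ one_ne_zero]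
      intro z hz
      have hz1 : ‖z‖ = 1 := by simpa using hz
      have hzc : z ∈ closedBall (0:ℂ) 1 := sphere_subset_closedBall hz
      have h0 : z - g z ≠ 0 := hne z (by rw [closure_ball _ one_ne_zero]; exact hzc)
      rw [Complex.norm_exp, Real.exp_le_exp, Complex.neg_re, neg_le_neg_iff]
      have hgz := hlt z hzc
      have hN : 0 < Complex.normSq (z - g z) := Complex.normSq_pos.2 h0
      have e1 : Complex.normSq z = 1 := by rw [Complex.normSq_eq_norm_sq, hz1]; norm_num
      have e2 : Complex.normSq (g z) ≤ 1 := by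
        rw [Complex.normSq_eq_norm_sq]; nlinarith [norm_nonneg (g z)]
      rw [← div_eq_mul_inv, Complex.div_re, ← add_div, le_div_iff₀ hN]
      simp only [Complex.normSq_apply, Complex.sub_re, Complex.sub_im] at *
      nlinarith) (z := 0) (subset_closure (by simp))
  simp at hb
  norm_num at hb

/-- boundary rigidity: an imaginary value in the disk forces constancy -/
lemma const_of_re_zero (p : ℂ → ℂ) (hp : DiffContOnCl ℂ p (ball (0:ℂ) 1))
    (hre : ∀ z ∈ closedBall (0 : ℂ) 1, 0 ≤ (p z).re) (c : ℂ) (hc : c ∈ ball (0:ℂ) 1)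
    (h0 : (p c).re = 0) : p 1 = p c := by
  have hcl : closure (ball (0:ℂ) 1) = closedBall 0 1 := closure_ball _ one_ne_zero
  have hne : ∀ z ∈ closure (ball (0:ℂ) 1), 1 + p z ≠ 0 := by
    rw [hcl]
    intro z hz h
    have := congrArg Complex.re h
    have := hre z hz
    simp at *
    linarith
  have h1 : DiffContOnCl ℂ (fun _ : ℂ => (1:ℂ)) (ball (0:ℂ) 1) := diffContOnCl_const
  have hF : DiffContOnCl ℂ (fun z => (1 - p z) * (1 + p z)⁻¹) (ball (0:ℂ) 1) :=
    (h1.sub hp).smul ((h1.add hp).inv hne)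
  have hle : ∀ z ∈ closedBall (0:ℂ) 1, ‖(1 - p z) * (1 + p z)⁻¹‖ ≤ 1 := by
    intro z hz
    have hn : 0 < ‖1 + p z‖ := norm_pos_iff.2 (hne z (hcl ▸ hz))
    rw [norm_mul, norm_inv, ← div_eq_mul_inv, div_le_one hn]
    apply le_of_sq_le_sq _ hn.le
    rw [← Complex.normSq_eq_norm_sq, ← Complex.normSq_eq_norm_sq]
    have := hre z hz
    simp [Complex.normSq_apply]
    nlinarith
  have heq : ‖(1 - p c) * (1 + p c)⁻¹‖ = 1 := by
    have hn : 0 < ‖1 + p c‖ := norm_pos_iff.2 (hne c (subset_closure hc))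
    rw [norm_mul, norm_inv, ← div_eq_mul_inv, div_eq_one_iff_eq hn.ne']
    rw [← sq_eq_sq₀ (norm_nonneg _) hn.le, ← Complex.normSq_eq_norm_sq, ← Complex.normSq_eq_norm_sq]
    simp [Complex.normSq_apply, h0]
  have key := Complex.eqOn_closure_of_isPreconnected_of_isMaxOn_norm
    (convex_ball (0:ℂ) 1).isPreconnected isOpen_ball hF hc
    (fun z hz => by
      show ‖(1 - p z) * (1 + p z)⁻¹‖ ≤ ‖(1 - p c) * (1 + p c)⁻¹‖
      rw [heq]; exact hle z (ball_subset_closedBall hz))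
  have m1 : (1:ℂ) ∈ closure (ball (0:ℂ) 1) := by rw [hcl]; simp
  have h := key m1
  simp only [Function.const_apply] at h
  have a := hne 1 m1
  have b := hne c (subset_closure hc)
  rw [← div_eq_mul_inv, ← div_eq_mul_inv, div_eq_div_iff a b] at h
  linear_combination (-1/2) * h

/-- if the Euclidean distance between `p̃(𝕋)` and
`K_k(𝕋) = {ikr : r ≤ -1/4}` (the image of the unit circle under the rotated Koebe
function `K_k(z) = ikz/(1-z)²`) exceeds some `ε > 0`, then the generator
`(1-z)² p̃(z) - ikz` has a zero `z₀` in the open unit disk. -/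
theorem stmt_7 (p : ℂ → ℂ) (k : ℝ) (hk : k ≠ 0)
    (hol : DifferentiableOn ℂ p (ball (0 : ℂ) 1))
    (hcont : ContinuousOn p (closedBall (0 : ℂ) 1))
    (hre : ∀ z ∈ closedBall (0 : ℂ) 1, 0 ≤ (p z).re)
    (hdist : ∃ ε : ℝ, 0 < ε ∧ ∀ z : ℂ, ‖z‖ = 1 →
      ∀ r : ℝ, r ≤ -(1 / 4) → ε < dist (p z) (Complex.I * k * r)) :
    ∃ z₀ : ℂ, ‖z₀‖ < 1 ∧
      (1 - z₀) ^ 2 * p z₀ = Complex.I * k * z₀ := by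
  obtain ⟨ε, hε, hd⟩ := hdist
  have hcl : closure (ball (0:ℂ) 1) = closedBall 0 1 := closure_ball _ one_ne_zero
  have hp : DiffContOnCl ℂ p (ball (0:ℂ) 1) := ⟨hol, hcl ▸ hcont⟩
  have hk' : (k:ℂ) ≠ 0 := by exact_mod_cast hk
  have hcirc : ∀ z : ℂ, ‖z‖ = 1 → ∀ r : ℝ, r ≤ -(1/4) → p z ≠ Complex.I * k * r := by
    intro z hz r hr h
    have := hd z hz r hr
    rw [h, dist_self] at this
    linarith
  have hray : ∀ z ∈ closedBall (0:ℂ) 1, ∀ r : ℝ, r ≤ -(1/4) → p z ≠ Complex.I * k * r := by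
    intro z hz r hr h
    rcases (show ‖z‖ ≤ 1 by simpa using hz).lt_or_eq with h1 | h1
    · have := const_of_re_zero p hp hre z (by simpa using h1) (by rw [h]; simp)
      exact hcirc 1 (by simp) r hr (this.trans h)
    · exact hcirc z h1 r hr h
  set q : ℂ → ℂ := fun z => 4 / (Complex.I * k) * p z + 1 with hq
  have hqd : DiffContOnCl ℂ q (ball (0:ℂ) 1) := (hp.const_smul (4 / (Complex.I * k))).add_const 1
  have hqs : ∀ z ∈ closedBall (0:ℂ) 1, q z ∈ Complex.slitPlane := by
    intro z hz
    by_contra hcon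
    rw [Complex.mem_slitPlane_iff, not_or, not_lt, not_not] at hcon
    obtain ⟨hr, hi⟩ := hcon
    have hqr : q z = ((q z).re : ℂ) := Complex.ext rfl (by simpa using hi)
    apply hray z hz (((q z).re - 1) / 4) (by linarith)
    push_cast
    rw [← hqr]
    simp only [hq]
    field_simp
    ring
  set s : ℂ → ℂ := fun z => cexp (Complex.log (q z) / 2) with hs
  have hs2 : ∀ z ∈ closedBall (0:ℂ) 1, s z ^ 2 = q z := by
    intro z hz
    simp only [hs]
    rw [← Complex.exp_nat_mul]
    rw [show ((2:ℕ):ℂ) * (Complex.log (q z) / 2) = Complex.log (q z) by push_cast; ring]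
    exact Complex.exp_log (Complex.slitPlane_ne_zero (hqs z hz))
  have hsre : ∀ z ∈ closedBall (0:ℂ) 1, 0 < (s z).re := by
    intro z hz
    simp only [hs]
    rw [Complex.exp_re]
    apply mul_pos (Real.exp_pos _)
    have him : (Complex.log (q z) / 2).im = (q z).arg / 2 := by
      rw [show (2:ℂ) = ((2:ℝ):ℂ) by norm_num, Complex.div_ofReal_im, Complex.log_im]
    rw [him]
    have h1 := Complex.neg_pi_lt_arg (q z)
    have h2 := (Complex.mem_slitPlane_iff_arg.1 (hqs z hz)).1
    have h3 := lt_of_le_of_ne (Complex.arg_le_pi (q z)) h2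
    exact Real.cos_pos_of_mem_Ioo ⟨by linarith, by linarith⟩
  have hsd : DiffContOnCl ℂ s (ball (0:ℂ) 1) := by
    refine ⟨fun z hz => ?_, fun z hz => ?_⟩
    · exact (((hqd.1 z hz).clog (hqs z (ball_subset_closedBall hz))).div_const 2).cexp
    · exact (((hqd.2 z hz).clog (hqs z (hcl ▸ hz))).div_const 2).cexp
  have hne : ∀ z ∈ closure (ball (0:ℂ) 1), s z + 1 ≠ 0 := by
    rw [hcl]
    intro z hz h
    have h1 := congrArg Complex.re h
    have h2 := hsre z hz
    rw [Complex.add_re, Complex.one_re, Complex.zero_re] at h1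
    linarith
  have hgd : DiffContOnCl ℂ (fun z => (s z - 1) * (s z + 1)⁻¹) (ball (0:ℂ) 1) :=
    (hsd.sub_const 1).smul ((hsd.add_const 1).inv hne)
  obtain ⟨z, hz, hfix⟩ := fixed_point_disk _ hgd (by
    intro z hz
    have hn : 0 < ‖s z + 1‖ := norm_pos_iff.2 (hne z (hcl ▸ hz))
    rw [norm_mul, norm_inv, ← div_eq_mul_inv, div_lt_one hn]
    apply lt_of_pow_lt_pow_left₀ 2 hn.le
    rw [← Complex.normSq_eq_norm_sq, ← Complex.normSq_eq_norm_sq]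
    have := hsre z hz
    simp only [Complex.normSq_apply, Complex.sub_re, Complex.add_re, Complex.sub_im,
      Complex.add_im, Complex.one_re, Complex.one_im]
    nlinarith)
  have hzc : z ∈ closedBall (0:ℂ) 1 := by simpa using hz.le
  refine ⟨z, hz, ?_⟩
  have h1 := hne z (hcl ▸ hzc)
  have h2 : s z - 1 = z * (s z + 1) := by
    rw [← div_eq_mul_inv, div_eq_iff h1] at hfix
    exact hfix
  have h3 : s z * (1 - z) = 1 + z := by linear_combination h2
  have h4 : q z * (1 - z)^2 = (1 + z)^2 := by rw [← hs2 z hzc, ← mul_pow, h3]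
  have h5 : Complex.I * k * (q z - 1) = 4 * p z := by
    simp only [hq]
    have := Complex.I_ne_zero
    field_simp
    ring
  linear_combination (-(1 - z)^2/4) * h5 + (Complex.I * k / 4) * h4
end

section
/- Let p̃ : 𝔻 → ℂ be holomorphic with Re p̃(z) ≥ 0 for all z ∈ 𝔻. Then for every ε with 0 < ε < 1 there exists k₀ > 0 such that for all real k with |k| > k₀ there is a unique z₀ with |z₀| ≤ ε satisfying (1 − z₀)² p̃(z₀) = i k z₀. In particular, for |k| > k₀ the semigroup generated by (1−z)²p̃(z) − ikz is elliptic and its Denjoy–Wolff point lies within distance ε of the origin. -/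
open Complex Metric

/-- for every `0 < ε < 1` there is `k₀ > 0` such that for all real `k`
with `|k| > k₀` the generator `(1-z)² p̃(z) - ikz` has a unique zero `z₀` with
`|z₀| ≤ ε`; in particular the generated semigroup is elliptic and its
Denjoy–Wolff point lies within distance `ε` of the origin. -/
theorem stmt_8 (p : ℂ → ℂ)
    (hol : DifferentiableOn ℂ p (ball (0 : ℂ) 1))
    (hre : ∀ z ∈ ball (0 : ℂ) 1, 0 ≤ (p z).re) :
    ∀ ε : ℝ, 0 < ε → ε < 1 → ∃ k₀ : ℝ, 0 < k₀ ∧ ∀ k : ℝ, k₀ < |k| →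
      ∃! z₀ : ℂ, ‖z₀‖ ≤ ε ∧
        (1 - z₀) ^ 2 * p z₀ = Complex.I * k * z₀ := by
  intro ε hε hε1
  set f : ℂ → ℂ := fun z => (1 - z) ^ 2 * p z with hf
  have hfd : DifferentiableOn ℂ f (ball (0 : ℂ) 1) := by
    apply DifferentiableOn.mul _ hol
    fun_prop
  have hsub : closedBall (0 : ℂ) ε ⊆ ball 0 1 := closedBall_subset_ball hε1
  have hdc : ContinuousOn (deriv f) (closedBall (0 : ℂ) ε) :=
    ((hfd.deriv isOpen_ball).continuousOn).mono hsub
  obtain ⟨M, hM⟩ := (isCompact_closedBall (0 : ℂ) ε).exists_bound_of_continuousOn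
    (hfd.continuousOn.mono hsub)
  obtain ⟨L, hL⟩ := (isCompact_closedBall (0 : ℂ) ε).exists_bound_of_continuousOn hdc
  have h0 : (0 : ℂ) ∈ closedBall (0 : ℂ) ε := by simp [hε.le]
  have hM0 : 0 ≤ M := (norm_nonneg _).trans (hM 0 h0)
  have hL0 : 0 ≤ L := (norm_nonneg _).trans (hL 0 h0)
  have hlip : ∀ x ∈ closedBall (0 : ℂ) ε, ∀ y ∈ closedBall (0 : ℂ) ε,
      ‖f y - f x‖ ≤ L * ‖y - x‖ := fun x hx y hy =>
    (convex_closedBall (0 : ℂ) ε).norm_image_sub_le_of_norm_deriv_le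
      (fun z hz => hfd.differentiableAt (isOpen_ball.mem_nhds (hsub hz))) hL hx hy
  refine ⟨M / ε + L + 1, by positivity, fun k hk => ?_⟩
  have hMε : 0 ≤ M / ε := by positivity
  have hk0 : 0 < |k| := by linarith
  have hkM : M ≤ ε * |k| := by
    have : M / ε ≤ |k| := by linarith
    rw [div_le_iff₀ hε] at this
    linarith
  have hkL : L < |k| := by linarith
  have hkne : (Complex.I * k : ℂ) ≠ 0 := by
    simpa using abs_pos.mp hk0
  have hnorm : ‖(Complex.I * k : ℂ)‖ = |k| := by simp
  have hT : ∀ z ∈ closedBall (0 : ℂ) ε, f z / (Complex.I * k) ∈ closedBall (0 : ℂ) ε := by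
    intro z hz
    rw [mem_closedBall_zero_iff, norm_div, hnorm, div_le_iff₀ hk0]
    exact (hM z hz).trans hkM
  let T : closedBall (0 : ℂ) ε → closedBall (0 : ℂ) ε := fun z => ⟨_, hT z z.2⟩
  have hq : 0 ≤ L / |k| := by positivity
  have hc : ContractingWith ⟨L / |k|, hq⟩ T := by
    constructor
    · apply NNReal.coe_lt_coe.mp
      change L / |k| < 1
      rw [div_lt_one hk0]
      exact hkL
    · apply LipschitzWith.of_dist_le_mul
      intro x y
      change dist (f x / (Complex.I * k)) (f y / (Complex.I * k)) ≤ L / |k| * dist (x : ℂ) y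
      rw [dist_eq_norm, dist_eq_norm, ← sub_div, norm_div, hnorm, div_mul_eq_mul_div]
      have := hlip y y.2 x x.2
      gcongr
  have : CompleteSpace (closedBall (0 : ℂ) ε) :=
    isClosed_closedBall.completeSpace_coe
  have : Nonempty (closedBall (0 : ℂ) ε) := ⟨⟨0, h0⟩⟩
  have hfix := hc.fixedPoint_isFixedPt
  refine ⟨(ContractingWith.fixedPoint T hc : closedBall (0 : ℂ) ε), ⟨?_, ?_⟩, ?_⟩
  · exact mem_closedBall_zero_iff.mp (ContractingWith.fixedPoint T hc).2
  · have h := congrArg Subtype.val hfix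
    change f _ / (Complex.I * k) = _ at h
    rw [div_eq_iff hkne] at h
    rw [mul_comm (Complex.I * (k : ℂ))]
    exact h
  · rintro y ⟨hy, hye⟩
    have hyb : y ∈ closedBall (0 : ℂ) ε := mem_closedBall_zero_iff.mpr hy
    have : Function.IsFixedPt T ⟨y, hyb⟩ := by
      apply Subtype.ext
      change f y / (Complex.I * k) = y
      rw [div_eq_iff hkne, mul_comm y]
      exact hye
    exact congrArg Subtype.val (hc.fixedPoint_unique this)
end

section
/- Let p̃ : 𝔻 → ℂ be holomorphic with Re p̃(z) ≥ 0 for all z ∈ 𝔻, let k ∈ ℝ with k ≠ 0, and suppose z₀ ∈ 𝔻 satisfies (1 − z₀)² p̃(z₀) = i k z₀ (so the semigroup generated by (1−z)²p̃(z) − ikz is elliptic with Denjoy–Wolff point z₀). If k > 0 then Im z₀ ≤ 0, and if k < 0 then Im z₀ ≥ 0. Moreover, Im z₀ = 0 holds if and only if p̃ is a constant purely imaginary function, p̃(z) ≡ iB for some B ∈ ℝ. -/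
open Complex Metric

/-- if `z₀ ∈ 𝔻` is a zero of the generator `(1-z)² p̃(z) - ikz`
(`k ≠ 0`), i.e. the Denjoy–Wolff point of the generated elliptic semigroup, then
`Im z₀ ≤ 0` for `k > 0`, `Im z₀ ≥ 0` for `k < 0`, and `Im z₀ = 0` precisely when
`p̃ ≡ iB` for some real constant `B`. -/
theorem stmt_9 (p : ℂ → ℂ)
    (hol : DifferentiableOn ℂ p (ball (0 : ℂ) 1))
    (hre : ∀ z ∈ ball (0 : ℂ) 1, 0 ≤ (p z).re)
    (k : ℝ) (hk : k ≠ 0)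
    (z₀ : ℂ) (hz₀ : z₀ ∈ ball (0 : ℂ) 1)
    (hzero : (1 - z₀) ^ 2 * p z₀ = Complex.I * k * z₀) :
    (0 < k → z₀.im ≤ 0) ∧
    (k < 0 → 0 ≤ z₀.im) ∧
    (z₀.im = 0 ↔ ∃ B : ℝ, ∀ z ∈ ball (0 : ℂ) 1, p z = Complex.I * B) := by
  have hn : z₀.re ^ 2 + z₀.im ^ 2 < 1 := by
    have h1 : ‖z₀‖ < 1 := by simpa using hz₀
    have h2 : ‖z₀‖ ^ 2 = z₀.re ^ 2 + z₀.im ^ 2 := by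
      rw [Complex.sq_norm, Complex.normSq_apply]; ring
    nlinarith [norm_nonneg z₀]
  have hx : 0 < 1 - z₀.re := by nlinarith [sq_nonneg z₀.im, sq_nonneg (z₀.re - 1)]
  have key : ((1 - z₀.re) ^ 2 + z₀.im ^ 2) ^ 2 * (p z₀).re
      = -k * z₀.im * (1 - (z₀.re ^ 2 + z₀.im ^ 2)) := by
    have h1 := congrArg Complex.re hzero
    have h2 := congrArg Complex.im hzero
    simp [pow_two] at h1 h2
    linear_combination ((1 - z₀.re) ^ 2 - z₀.im ^ 2) * h1 - (2 * (1 - z₀.re) * z₀.im) * h2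
  have hpos : 0 < ((1 - z₀.re) ^ 2 + z₀.im ^ 2) ^ 2 := by positivity
  have hu := hre z₀ hz₀
  have hd : 0 < 1 - (z₀.re ^ 2 + z₀.im ^ 2) := by linarith
  have hky : 0 ≤ -k * z₀.im := by
    have : 0 ≤ -k * z₀.im * (1 - (z₀.re ^ 2 + z₀.im ^ 2)) := by
      rw [← key]; positivity
    exact nonneg_of_mul_nonneg_left this hd
  refine ⟨fun h => by by_contra! hc; nlinarith [mul_pos h hc],
    fun h => by by_contra! hc; nlinarith [mul_pos_of_neg_of_neg h hc], ?_, ?_⟩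
  · intro hy
    have hre0 : (p z₀).re = 0 := by
      rw [hy] at key hpos
      simp only [mul_zero, zero_mul] at key
      exact (mul_eq_zero.mp key).resolve_left hpos.ne'
    have han : AnalyticOnNhd ℂ p (ball (0 : ℂ) 1) := hol.analyticOnNhd isOpen_ball
    rcases han.is_constant_or_isOpen (convex_ball (0 : ℂ) 1).isPreconnected with ⟨w, hw⟩ | ho
    · refine ⟨(p z₀).im, fun z hz => ?_⟩
      rw [hw z hz, ← hw z₀ hz₀]
      apply Complex.ext <;> simp [hre0]
    · exfalso
      have ho' := ho _ subset_rfl isOpen_ball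
      obtain ⟨ε, hε, hb⟩ := Metric.isOpen_iff.mp ho' (p z₀) ⟨z₀, hz₀, rfl⟩
      have hm : p z₀ - ((ε / 2 : ℝ) : ℂ) ∈ ball (p z₀) ε := by
        rw [mem_ball, dist_eq_norm, sub_sub_cancel_left, norm_neg, Complex.norm_real,
          Real.norm_of_nonneg (by positivity)]
        linarith
      obtain ⟨z, hz, hzp⟩ := hb hm
      have := hre z hz
      rw [hzp, Complex.sub_re, Complex.ofReal_re, hre0] at this
      linarith
  · rintro ⟨B, hB⟩
    have h0 : (p z₀).re = 0 := by rw [hB z₀ hz₀]; simp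
    rw [h0, mul_zero] at key
    have h3 := (mul_eq_zero.mp key.symm).resolve_right hd.ne'
    exact (mul_eq_zero.mp h3).resolve_left (neg_ne_zero.mpr hk)
end

section
/- For every k ∈ ℝ there exists z ∈ ℂ with |z| = 1 such that (1 − z)³ + i k z (1 + z) = 0. (Equivalently, the equation (1 − e^{iθ})/(1 + e^{iθ}) = i k e^{iθ}/(e^{iθ} − 1)², i.e., tan(θ/2) = k/(2(cos θ − 1)), has a solution θ for every k; thus for the Herglotz function p̃(z) = (1 − z)/(1 + z) the map F(z) = K_k^{-1}(p̃(z)) has a fixed point on the unit circle for every k.) -/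
open Complex

/-- for every `k ∈ ℝ` the equation `(1-z)³ + ikz(1+z) = 0` has a
solution on the unit circle; i.e. for `p̃(z) = (1-z)/(1+z)` the map
`F = K_k⁻¹ ∘ p̃` has a fixed point on `𝕋` for every `k`. -/
theorem stmt_10 :
    ∀ k : ℝ, ∃ z : ℂ, ‖z‖ = 1 ∧
      (1 - z) ^ 3 + Complex.I * k * z * (1 + z) = 0 := by
  intro k
  have hc : Continuous (fun t : ℝ => 4 * Real.sin t ^ 3 + k * Real.cos t) := by fun_prop
  have h0 : (0 : ℝ) ∈ Set.uIcc (4 * Real.sin 0 ^ 3 + k * Real.cos 0)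
      (4 * Real.sin Real.pi ^ 3 + k * Real.cos Real.pi) := by
    simp only [Real.sin_zero, Real.cos_zero, Real.sin_pi, Real.cos_pi, Set.mem_uIcc]
    rcases le_total k 0 with h | h
    · left; constructor <;> linarith
    · right; constructor <;> linarith
  obtain ⟨t, -, ht⟩ := intermediate_value_uIcc (a := 0) (b := Real.pi) hc.continuousOn h0
  have ht' : 4 * Complex.sin t ^ 3 + k * Complex.cos t = 0 := by
    have := congrArg (fun x : ℝ => (x : ℂ)) ht
    simpa using this
  refine ⟨Complex.exp (t * I) ^ 2, by simp [Complex.norm_exp_ofReal_mul_I], ?_⟩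
  have hs := Complex.sin_sq_add_cos_sq (t : ℂ)
  rw [Complex.exp_mul_I]
  set s := Complex.sin t
  set c := Complex.cos t
  have hI := Complex.I_sq
  have h1 : 1 - (c + s * I) ^ 2 = -2 * I * s * (c + s * I) := by
    linear_combination -hs + s ^ 2 * hI
  have h2 : 1 + (c + s * I) ^ 2 = 2 * c * (c + s * I) := by
    linear_combination -hs + s ^ 2 * hI
  rw [h1, h2]
  linear_combination 2 * I * (c + s * I) ^ 3 * ht' - 8 * I * s ^ 3 * (c + s * I) ^ 3 * hI
end

section
/- Let (Ω, 𝓕, P) be a probability space and B : [0,∞) × Ω → ℝ a standard one-dimensional Brownian motion: B_0 = 0 a.s., B has independent increments, B_t − B_s is Gaussian with mean 0 and variance t − s for 0 ≤ s ≤ t, each B_t is measurable, and almost every sample path is continuous. Fix k ∈ ℝ, z ∈ ℂ, t ≥ 0. Then E[ e^{-t}(z + ∫₀ᵗ e^{s} e^{ikB_s} ds) · e^{-ikB_t} ] = (1 − e^{-(1 + k²/2)t})/(1 + k²/2) + z e^{-(1 + k²/2)t}. -/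
open Complex MeasureTheory ProbabilityTheory intervalIntegral

/-- for a standard one-dimensional Brownian motion `B` and the
process `φ_t(z) e^{-ikB_t}` with `φ_t(z,ω) = e^{-t}(z + ∫₀ᵗ e^{s} e^{ikB_s} ds)`,
one has `E[φ_t(z)·e^{-ikB_t}] = (1 - e^{-(1+k²/2)t})/(1 + k²/2) + z e^{-(1+k²/2)t}`. -/
theorem stmt_15 {Ω : Type*} [MeasurableSpace Ω] (P : Measure Ω) [IsProbabilityMeasure P]
    (B : ℝ → Ω → ℝ)
    (hB0 : ∀ᵐ ω ∂P, B 0 ω = 0)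
    (hindep : ∀ n : ℕ, ∀ u : Fin (n + 1) → ℝ, Monotone u → (∀ i, 0 ≤ u i) →
      iIndepFun (m := fun _ : Fin n => (inferInstance : MeasurableSpace ℝ))
        (fun i ω => B (u i.succ) ω - B (u i.castSucc) ω) P)
    (hgauss : ∀ s t : ℝ, 0 ≤ s → s ≤ t →
      P.map (fun ω => B t ω - B s ω) = gaussianReal 0 (Real.toNNReal (t - s)))
    (hmeas : ∀ t : ℝ, 0 ≤ t → Measurable (B t))
    (hcontpath : ∀ᵐ ω ∂P, ContinuousOn (fun t => B t ω) (Set.Ici (0 : ℝ)))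
    (k : ℝ) (z : ℂ) (t : ℝ) (ht : 0 ≤ t) :
    ∫ ω, (Complex.exp (-t) *
        (z + ∫ s in (0 : ℝ)..t, Complex.exp s * Complex.exp (Complex.I * k * B s ω)))
        * Complex.exp (-(Complex.I * k * B t ω)) ∂P
      = (1 - Complex.exp (-(1 + k ^ 2 / 2) * t)) / (1 + k ^ 2 / 2)
        + z * Complex.exp (-(1 + k ^ 2 / 2) * t) := by
  classical
  -- a modification with everywhere continuous paths
  obtain ⟨X, hXc, hXm, hXB⟩ : ∃ X : ℝ → Ω → ℝ, (∀ ω, Continuous fun s => X s ω) ∧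
      (∀ s, Measurable (X s)) ∧ (∀ᵐ ω ∂P, ∀ s, 0 ≤ s → X s ω = B s ω) := by
    have h0 := ae_iff.1 hcontpath
    set N := toMeasurable P {ω | ¬ ContinuousOn (fun t => B t ω) (Set.Ici (0 : ℝ))} with hN
    have hNm : MeasurableSet N := measurableSet_toMeasurable _ _
    have hN0 : P N = 0 := by rw [hN, measure_toMeasurable, h0]
    refine ⟨fun s ω => if ω ∈ N then 0 else B (max s 0) ω, ?_, ?_, ?_⟩
    · intro ω
      by_cases hω : ω ∈ N
      · simp only [hω, if_true]; exact continuous_const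
      · simp only [hω, if_false]
        have hc : ContinuousOn (fun t => B t ω) (Set.Ici (0 : ℝ)) := by
          by_contra hcon
          exact hω (subset_toMeasurable _ _ hcon)
        exact hc.comp_continuous (by fun_prop) (fun s => le_max_right s 0)
    · intro s
      exact Measurable.ite hNm measurable_const (hmeas _ (le_max_right s 0))
    · have : ∀ᵐ ω ∂P, ω ∉ N := measure_eq_zero_iff_ae_notMem.1 hN0
      filter_upwards [this] with ω hω s hs
      simp [hω, max_eq_left hs]
  have hXu : Measurable (Function.uncurry X) :=
    measurable_uncurry_of_continuous_of_measurable hXc hXm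
  -- characteristic function of the increments
  have hchar : ∀ s, 0 ≤ s → s ≤ t →
      ∫ ω, cexp (((-k : ℝ) : ℂ) * ((X t ω - X s ω : ℝ) : ℂ) * I) ∂P
        = cexp (-((t - s : ℝ) : ℂ) * (k : ℂ) ^ 2 / 2) := by
    intro s hs hst
    have h1 : ∫ ω, cexp (((-k : ℝ) : ℂ) * ((X t ω - X s ω : ℝ) : ℂ) * I) ∂P
        = ∫ ω, cexp (((-k : ℝ) : ℂ) * ((B t ω - B s ω : ℝ) : ℂ) * I) ∂P := by
      apply MeasureTheory.integral_congr_ae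
      filter_upwards [hXB] with ω hω
      rw [hω s hs, hω t ht]
    have h2 := charFun_gaussianReal (μ := 0) (v := Real.toNNReal (t - s)) (-k)
    have hd : Measurable fun ω => B t ω - B s ω := (hmeas t ht).sub (hmeas s hs)
    rw [← hgauss s t hs hst, charFun_apply_real, integral_map
      hd.aemeasurable (by fun_prop)] at h2
    rw [h1, h2]
    congr 1
    have : ((Real.toNNReal (t - s) : ℝ) : ℂ) = ((t - s : ℝ) : ℂ) := by
      rw [Real.coe_toNNReal _ (sub_nonneg.2 hst)]
    rw [this]
    push_cast
    ring
  let F : ℝ → Ω → ℂ := fun s ω =>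
    cexp ((s - t : ℝ) : ℂ) * cexp (((-k : ℝ) : ℂ) * ((X t ω - X s ω : ℝ) : ℂ) * I)
  have hFm : Measurable (Function.uncurry F) := by
    have ha : Measurable fun p : ℝ × Ω => X p.1 p.2 := hXu
    have hb : Measurable fun p : ℝ × Ω => X t p.2 := (hXm t).comp measurable_snd
    change Measurable fun p : ℝ × Ω => cexp ((p.1 - t : ℝ) : ℂ) *
      cexp (((-k : ℝ) : ℂ) * ((X t p.2 - X p.1 p.2 : ℝ) : ℂ) * I)
    fun_prop
  have hFn : ∀ s ω, ‖F s ω‖ = Real.exp (s - t) := by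
    intro s ω
    simp only [F]
    rw [norm_mul, Complex.norm_exp_ofReal, ← Complex.ofReal_mul, Complex.norm_exp_ofReal_mul_I,
      mul_one]
  have hFi : Integrable (Function.uncurry F) ((volume.restrict (Set.uIoc 0 t)).prod P) := by
    haveI : IsFiniteMeasure (volume.restrict (Set.uIoc (0 : ℝ) t)) := by
      rw [Set.uIoc_of_le ht]; infer_instance
    refine Integrable.of_bound hFm.aestronglyMeasurable 1 ?_
    have h1 : ∀ᵐ s ∂(volume.restrict (Set.uIoc 0 t)), s ∈ Set.uIoc 0 t :=
      ae_restrict_mem measurableSet_uIoc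
    filter_upwards [Measure.quasiMeasurePreserving_fst.ae h1] with p hp
    rw [Set.uIoc_of_le ht] at hp
    change ‖F p.1 p.2‖ ≤ 1
    rw [hFn]
    exact Real.exp_le_one_iff.2 (by linarith [hp.2])
  have hFint : Integrable (fun ω => ∫ s in (0 : ℝ)..t, F s ω) P := by
    have := hFi.integral_prod_right
    rw [Set.uIoc_of_le ht] at this
    simp only [intervalIntegral.integral_of_le ht]
    exact this
  let G : Ω → ℂ := fun ω => cexp (((-k : ℝ) : ℂ) * ((X t ω - X 0 ω : ℝ) : ℂ) * I)
  have hGint : Integrable G P := by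
    refine Integrable.of_bound (Measurable.aestronglyMeasurable ?_) 1 (ae_of_all _ fun ω => ?_)
    · have ha := hXm t
      have hb := hXm 0
      fun_prop
    · simp only [G]
      rw [← Complex.ofReal_mul, Complex.norm_exp_ofReal_mul_I]
  have hrew : ∫ ω, (Complex.exp (-t) *
        (z + ∫ s in (0 : ℝ)..t, Complex.exp s * Complex.exp (Complex.I * k * B s ω)))
        * Complex.exp (-(Complex.I * k * B t ω)) ∂P
      = ∫ ω, (cexp (-t) * z * G ω + ∫ s in (0 : ℝ)..t, F s ω) ∂P := by
    apply MeasureTheory.integral_congr_ae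
    filter_upwards [hXB, hB0] with ω hω h0
    have hG : G ω = Complex.exp (-(Complex.I * k * B t ω)) := by
      simp only [G]
      rw [hω t ht, hω 0 le_rfl, h0]
      congr 1
      push_cast
      ring
    have hF : ∫ s in (0 : ℝ)..t, F s ω = cexp (-t) *
        (∫ s in (0 : ℝ)..t, Complex.exp s * Complex.exp (Complex.I * k * B s ω))
        * Complex.exp (-(Complex.I * k * B t ω)) := by
      rw [← intervalIntegral.integral_const_mul, ← intervalIntegral.integral_mul_const]
      apply intervalIntegral.integral_congr
      intro s hs
      rw [Set.uIcc_of_le ht] at hs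
      simp only [F]
      rw [hω t ht, hω s hs.1]
      simp only [← Complex.exp_add]
      congr 1
      push_cast
      ring
    rw [hG, hF]
    ring
  have hc0 : (1 + (k : ℂ) ^ 2 / 2) ≠ 0 := by
    have : (1 + k ^ 2 / 2 : ℝ) ≠ 0 := by positivity
    exact_mod_cast this
  have hswap : ∫ ω, (∫ s in (0 : ℝ)..t, F s ω) ∂P
      = (1 - Complex.exp (-(1 + k ^ 2 / 2) * t)) / (1 + k ^ 2 / 2) := by
    rw [← intervalIntegral_integral_swap hFi]
    have h1 : ∫ s in (0 : ℝ)..t, (∫ ω, F s ω ∂P)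
        = ∫ s in (0 : ℝ)..t, cexp (-(1 + k ^ 2 / 2) * t) * cexp ((1 + k ^ 2 / 2) * s) := by
      apply intervalIntegral.integral_congr
      intro s hs
      rw [Set.uIcc_of_le ht] at hs
      simp only [F]
      rw [MeasureTheory.integral_const_mul, hchar s hs.1 hs.2, ← Complex.exp_add, ← Complex.exp_add]
      congr 1
      push_cast
      ring
    rw [h1, intervalIntegral.integral_const_mul, integral_exp_mul_complex hc0, ← mul_div_assoc,
      mul_sub, ← Complex.exp_add, ← Complex.exp_add]
    have e1 : (-(1 + (k : ℂ) ^ 2 / 2) * t + (1 + (k : ℂ) ^ 2 / 2) * t) = 0 := by ring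
    rw [e1]
    simp
  rw [hrew, MeasureTheory.integral_add (hGint.const_mul _) hFint, hswap, MeasureTheory.integral_const_mul,
    hchar 0 le_rfl ht, add_comm]
  congr 1
  rw [mul_comm (cexp _) z, mul_assoc, ← Complex.exp_add]
  congr 2
  push_cast
  ring
end

section
/- Let r₀ ∈ [0,1] and let r : [0,∞) → ℝ be differentiable with r(0) = r₀, 0 ≤ r(t) ≤ 1 for all t, and −(1 + r(t))² ≤ r'(t) ≤ (1 − r(t))² for all t ≥ 0. Then for all t ≥ 0: (r₀(1 − t) − t)/(1 + t(1 + r₀)) ≤ r(t) ≤ (r₀(1 − t) + t)/(1 + t(1 − r₀)). -/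
open Real Set

theorem aux_lower (u u' : ℝ → ℝ)
    (hr : ∀ t : ℝ, 0 ≤ t → 0 ≤ u t ∧ u t ≤ 2)
    (hd : ∀ t : ℝ, 0 ≤ t → HasDerivWithinAt u (u' t) (Set.Ici 0) t)
    (hi : ∀ t : ℝ, 0 ≤ t → -(u t) ^ 2 ≤ u' t) (t : ℝ) (ht : 0 ≤ t) :
    u 0 ≤ u t * (1 + t * u 0) := by
  rcases (hr 0 le_rfl).1.eq_or_lt with h0 | h0
  · rw [← h0]; simpa using (hr t ht).1
  have key : ∀ (g g' : ℝ → ℝ), (∀ t : ℝ, 0 ≤ t → HasDerivWithinAt g (g' t) (Set.Ici 0) t) →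
      (∀ t : ℝ, 0 ≤ t → 0 ≤ g' t) → ∀ s : ℝ, 0 ≤ s → g 0 ≤ g s := by
    intro g g' hg hg' s hs
    have : MonotoneOn g (Set.Ici 0) := by
      apply monotoneOn_of_hasDerivWithinAt_nonneg (f' := g') (convex_Ici 0)
      · intro x hx
        exact (hg x hx).continuousWithinAt
      · intro x hx
        exact (hg x (interior_subset hx)).mono interior_subset
      · intro x hx
        exact hg' x (interior_subset hx)
    exact this (Set.mem_Ici.2 le_rfl) (Set.mem_Ici.2 hs) hs
  have pos : ∀ s : ℝ, 0 ≤ s → 0 < u s := by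
    intro s hs
    have := key (fun x => u x * Real.exp (2 * x))
      (fun x => u' x * Real.exp (2 * x) + u x * (Real.exp (2 * x) * (2 * 1)))
      (fun x hx => (hd x hx).mul (((hasDerivAt_id x).const_mul 2).exp.hasDerivWithinAt))
      (fun x hx => by
        have h1 := hr x hx
        have h2 := hi x hx
        have h3 := Real.exp_pos (2 * x)
        have h4 : 0 ≤ u' x + 2 * u x := by nlinarith
        have := mul_nonneg h4 h3.le
        linarith) s hs
    simp only [mul_zero, Real.exp_zero, mul_one] at this
    exact pos_of_mul_pos_left (lt_of_lt_of_le h0 this) (Real.exp_pos _).le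
  have h := key (fun x => x - (u x)⁻¹) (fun x => 1 - (-(u' x) / (u x) ^ 2))
    (fun x hx => (hasDerivWithinAt_id x _).sub ((hd x hx).fun_inv (pos x hx).ne'))
    (fun x hx => by
      have h1 := pos x hx
      have h2 := hi x hx
      rw [sub_nonneg, div_le_one (by positivity)]
      linarith) t ht
  have ht' := pos t ht
  simp only [zero_sub] at h
  have h5 : (u t)⁻¹ ≤ t + (u 0)⁻¹ := by linarith
  have h6 := mul_le_mul_of_nonneg_left h5 (mul_pos ht' h0).le
  have h7 : u t * u 0 * (u t)⁻¹ = u 0 := by field_simp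
  have h8 : u t * u 0 * (t + (u 0)⁻¹) = u t * (1 + t * u 0) := by field_simp; ring
  linarith

/-- if `r : [0,∞) → [0,1]` is differentiable with `r(0) = r₀ ∈ [0,1]`
and satisfies the differential inequalities `-(1 + r)² ≤ r' ≤ (1 - r)²`, then
`(r₀(1-t) - t)/(1 + t(1 + r₀)) ≤ r(t) ≤ (r₀(1-t) + t)/(1 + t(1 - r₀))` for all
`t ≥ 0`. -/
theorem stmt_18 (r₀ : ℝ) (hr₀ : 0 ≤ r₀ ∧ r₀ ≤ 1)
    (r : ℝ → ℝ) (r' : ℝ → ℝ) (hr0 : r 0 = r₀)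
    (hrange : ∀ t : ℝ, 0 ≤ t → 0 ≤ r t ∧ r t ≤ 1)
    (hderiv : ∀ t : ℝ, 0 ≤ t → HasDerivWithinAt r (r' t) (Set.Ici 0) t)
    (hineq : ∀ t : ℝ, 0 ≤ t → -(1 + r t) ^ 2 ≤ r' t ∧ r' t ≤ (1 - r t) ^ 2) :
    ∀ t : ℝ, 0 ≤ t →
      (r₀ * (1 - t) - t) / (1 + t * (1 + r₀)) ≤ r t ∧
      r t ≤ (r₀ * (1 - t) + t) / (1 + t * (1 - r₀)) := by
  intro t ht
  constructor
  · have h := aux_lower (fun x => 1 + r x) r'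
      (fun x hx => by have := hrange x hx; constructor <;> linarith)
      (fun x hx => (hderiv x hx).const_add 1)
      (fun x hx => (hineq x hx).1) t ht
    simp only [hr0] at h
    have : 0 < 1 + t * (1 + r₀) := by nlinarith [mul_nonneg ht hr₀.1]
    rw [div_le_iff₀ this]
    linarith
  · have h := aux_lower (fun x => 1 - r x) (fun x => -r' x)
      (fun x hx => by have := hrange x hx; constructor <;> linarith)
      (fun x hx => (hderiv x hx).const_sub 1)
      (fun x hx => by have := (hineq x hx).2; linarith) t ht
    simp only [hr0] at h
    have : 0 < 1 + t * (1 - r₀) := by nlinarith [mul_nonneg ht (sub_nonneg.2 hr₀.2)]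
    rw [le_div_iff₀ this]
    linarith
end
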